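/- Let R be a Cohen–Macaulay local ring. Then the assignments X ↦ V(X) and Φ ↦ V^{-1}(Φ) give mutually inverse bijections between the set of resolving subcategories X of mod R such that κ(p) belongs to add_{R_p}(X_p) for every p ∈ V(X), and the set of specialization-closed subsets of Spec R contained in s(R). -/

import Mathlib

/-!
A finitely generated module `M` is free at `p` if and only if multiplication by some `s ∉ p` on `M`
factors through a finitely generated free module (`free_localized_iff`). This criterion shows that
nonfree loci are specialization-closed and that `V⁻¹(Φ)` is resolving (`isResolving_Vinv`). If `Φ`
is specialization-closed and `p ∈ Φ`, then `R/p ∈ V⁻¹(Φ)` and `(R/p)_p = κ(p)`, which is not free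
unless `R_p` is a field. So `V(V⁻¹(Φ)) = Φ` for `Φ ⊆ s(R)`, and `V⁻¹(Φ)` satisfies the condition on
residue fields.

The essential point is the inclusion `V⁻¹(V(𝒳)) ⊆ 𝒳`. It rests on `mem_of_factor`: if multiplication
by `s` on `N` factors through an object of `𝒳`, then `N ∈ 𝒳` as soon as the kernel `(0 :_N s)` lies
in `𝒳` and the cokernel `N/sN` has `𝒳`-dimension at most one, i.e. is a cokernel of an injection
between objects of `𝒳`. Put `Φ = V(𝒳)`.

* The hypothesis `κ(p) ∈ add 𝒳_p` makes multiplication by some `s ∉ p` on `R/p` factor through an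
  object of `𝒳`. Noetherian induction on `p ∈ Φ` gives `R/p ∈ 𝒳` (`quotient_mem`), and by prime
  filtrations `𝒳` contains every finitely generated module supported in `Φ`
  (`mem_of_support_subset`).
* A module `M` with `V(M) ⊆ Φ` is locally a direct summand of a power of `P = R` outside `Φ`.
  `mem_of_locally_summand` proves that this forces `M ∈ 𝒳`, for any Cohen–Macaulay module `P ∈ 𝒳`
  whose support contains that of `M`, by induction on `dim P`. Since `P` is Cohen–Macaulay, its
  associated primes are minimal in its support, and prime avoidance yields a `P`-regular `z` in the
  maximal ideal such that multiplication by `z` on `M` factors through an object of `𝒳`. The kernel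
  `(0 :_M z)` is supported in `Φ`, and `M/zM` is handled by the induction hypothesis for `P/zP` and
  the modules of `𝒳`-dimension at most one, which again form a resolving subcategory
  (`isResolving_dimLEOne`).
-/

open TensorProduct

noncomputable section

/-- The nonfree locus of a module: primes where the localization is a nonfree module. -/
def nonfreeLocus (R : Type) [CommRing R] (M : Type) [AddCommGroup M] [Module R M] :
    Set (PrimeSpectrum R) :=
  {p | ¬ Module.Free (Localization.AtPrime p.asIdeal) (LocalizedModule p.asIdeal.primeCompl M)}

/-- The nonfree locus of a subcategory of `mod R`. -/
def catNonfreeLocus (R : Type) [CommRing R] (𝒳 : Set (ModuleCat.{0} R)) :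
    Set (PrimeSpectrum R) :=
  ⋃ M ∈ 𝒳, nonfreeLocus R M

/-- A resolving subcategory of the category of finitely generated `R`-modules:
closed under isomorphism, consisting of finitely generated modules, containing `R`,
closed under direct summands, extensions and kernels of epimorphisms. -/
structure IsResolving (R : Type) [CommRing R] (𝒳 : Set (ModuleCat.{0} R)) : Prop where
  fg : ∀ M ∈ 𝒳, Module.Finite R M
  mem_of_iso : ∀ M N : ModuleCat.{0} R, Nonempty (M ≃ₗ[R] N) → M ∈ 𝒳 → N ∈ 𝒳
  ring_mem : ModuleCat.of R R ∈ 𝒳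
  summand_mem : ∀ M N : ModuleCat.{0} R,
    (∃ (i : N →ₗ[R] M) (p : M →ₗ[R] N), p ∘ₗ i = LinearMap.id) → M ∈ 𝒳 → N ∈ 𝒳
  extension_mem : ∀ (L M N : ModuleCat.{0} R) (f : L →ₗ[R] M) (g : M →ₗ[R] N),
    Function.Injective f → Function.Surjective g → Function.Exact f g →
      L ∈ 𝒳 → N ∈ 𝒳 → M ∈ 𝒳
  ker_epi_mem : ∀ (L M N : ModuleCat.{0} R) (f : L →ₗ[R] M) (g : M →ₗ[R] N),
    Function.Injective f → Function.Surjective g → Function.Exact f g →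
      M ∈ 𝒳 → N ∈ 𝒳 → L ∈ 𝒳

/-- Membership in the additive closure `add 𝒴` of a subcategory `𝒴` of `mod S`:
direct summands of finite direct sums of modules in `𝒴`. -/
def memAdd (S : Type) [CommRing S] (𝒴 : Set (ModuleCat.{0} S)) (N : Type)
    [AddCommGroup N] [Module S N] : Prop :=
  ∃ (n : ℕ) (Y : Fin n → ModuleCat.{0} S), (∀ i, Y i ∈ 𝒴) ∧
    ∃ (s : N →ₗ[S] ((i : Fin n) → Y i)) (r : ((i : Fin n) → Y i) →ₗ[S] N),
      r ∘ₗ s = LinearMap.id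

/-- The subcategory `𝒳_p` of `mod R_p` consisting of localizations of modules in `𝒳`. -/
def locCat (R : Type) [CommRing R] (𝒳 : Set (ModuleCat.{0} R)) (p : PrimeSpectrum R) :
    Set (ModuleCat.{0} (Localization.AtPrime p.asIdeal)) :=
  {N | ∃ X ∈ 𝒳, Nonempty
    (N ≃ₗ[Localization.AtPrime p.asIdeal] LocalizedModule p.asIdeal.primeCompl X)}

/-- `κ(p) ∈ add_{R_p} 𝒳_p`. -/
def kappaMemAdd (R : Type) [CommRing R] (𝒳 : Set (ModuleCat.{0} R)) (p : PrimeSpectrum R) :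
    Prop :=
  memAdd (Localization.AtPrime p.asIdeal) (locCat R 𝒳 p)
    (IsLocalRing.ResidueField (Localization.AtPrime p.asIdeal))

/-- A specialization-closed subset of `Spec R`. -/
def SpecClosed (R : Type) [CommRing R] (Φ : Set (PrimeSpectrum R)) : Prop :=
  ∀ p ∈ Φ, ∀ q : PrimeSpectrum R, p.asIdeal ≤ q.asIdeal → q ∈ Φ

/-- `s(R)`: the set of primes `p` such that `R_p` is not a field. -/
def nonFieldLocus (R : Type) [CommRing R] : Set (PrimeSpectrum R) :=
  {p | ¬ IsField (Localization.AtPrime p.asIdeal)}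

/-- A (Noetherian) local ring is regular iff its maximal ideal is generated by
`dim` many elements. -/
def IsRegularLoc (A : Type) [CommRing A] [IsLocalRing A] : Prop :=
  ∃ (n : ℕ) (x : Fin n → A), ringKrullDim A = (n : ℕ) ∧
    Ideal.span (Set.range x) = IsLocalRing.maximalIdeal A

/-- The singular locus of `R`. -/
def singLocus (R : Type) [CommRing R] : Set (PrimeSpectrum R) :=
  {p | ¬ IsRegularLoc (Localization.AtPrime p.asIdeal)}

/-- `V^{-1}(Φ)`: finitely generated modules whose nonfree locus is contained in `Φ`. -/
def Vinv (R : Type) [CommRing R] (Φ : Set (PrimeSpectrum R)) : Set (ModuleCat.{0} R) :=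
  {M | Module.Finite R M ∧ nonfreeLocus R M ⊆ Φ}

/-- The depth of a module: supremum of lengths of regular sequences in the maximal ideal. -/
def seqDepth (R : Type) [CommRing R] [IsLocalRing R] (M : Type) [AddCommGroup M]
    [Module R M] : ℕ∞ :=
  sSup {n : ℕ∞ | ∃ rs : List R, (rs.length : ℕ∞) = n ∧
    (∀ r ∈ rs, r ∈ IsLocalRing.maximalIdeal R) ∧ RingTheory.Sequence.IsRegular M rs}

/-- A local ring is Cohen–Macaulay if its depth equals its Krull dimension. -/
def IsCMLocalRing (R : Type) [CommRing R] [IsLocalRing R] : Prop :=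
  (seqDepth R R : WithBot ℕ∞) = ringKrullDim R

/-- A module over a local ring is Cohen–Macaulay ("maximal Cohen–Macaulay") if its depth
equals the Krull dimension of the ring. -/
def IsCMModule (R : Type) [CommRing R] [IsLocalRing R] (M : Type) [AddCommGroup M]
    [Module R M] : Prop :=
  (seqDepth R M : WithBot ℕ∞) = ringKrullDim R

/-- The subcategory `CM(R)` of `mod R` of (maximal) Cohen–Macaulay modules. -/
def CMcat (R : Type) [CommRing R] [IsLocalRing R] : Set (ModuleCat.{0} R) :=
  {M | Module.Finite R M ∧ IsCMModule R M}

/-- `V_CM^{-1}(Φ)`: Cohen–Macaulay modules whose nonfree locus is contained in `Φ`. -/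
def VinvCM (R : Type) [CommRing R] [IsLocalRing R] (Φ : Set (PrimeSpectrum R)) :
    Set (ModuleCat.{0} R) :=
  {M | Module.Finite R M ∧ IsCMModule R M ∧ nonfreeLocus R M ⊆ Φ}

/-- `IsSyzygyOf R n M S` : `S` is an `n`-th syzygy of `M` in a minimal free resolution,
i.e. `S ≅ Ω^n M`. -/
def IsSyzygyOf (R : Type) [CommRing R] [IsLocalRing R] :
    ℕ → ModuleCat.{0} R → ModuleCat.{0} R → Prop
  | 0, M, S => Nonempty (S ≃ₗ[R] M)
  | n + 1, M, S => ∃ (m : ℕ) (π : (Fin m → R) →ₗ[R] M), Function.Surjective π ∧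
      LinearMap.ker π ≤ (IsLocalRing.maximalIdeal R) • (⊤ : Submodule R (Fin m → R)) ∧
      IsSyzygyOf R n (ModuleCat.of R (LinearMap.ker π)) S

/-- `IsTransposeOf R X M T` : `T` is (isomorphic to) the transpose `tr_X M` of `M`
with respect to `X`, computed from a minimal free presentation of `M`. -/
def IsTransposeOf (R : Type) [CommRing R] [IsLocalRing R] (X : Type) [AddCommGroup X]
    [Module R X] (M : Type) [AddCommGroup M] [Module R M] (T : Type) [AddCommGroup T]
    [Module R T] : Prop :=
  ∃ (n m : ℕ) (dl : (Fin n → R) →ₗ[R] (Fin m → R)) (π : (Fin m → R) →ₗ[R] M),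
    Function.Surjective π ∧ Function.Exact dl π ∧
    LinearMap.ker π ≤ (IsLocalRing.maximalIdeal R) • (⊤ : Submodule R (Fin m → R)) ∧
    LinearMap.ker dl ≤ (IsLocalRing.maximalIdeal R) • (⊤ : Submodule R (Fin n → R)) ∧
    Nonempty (T ≃ₗ[R]
      (((Fin n → R) →ₗ[R] X) ⧸ LinearMap.range (LinearMap.lcomp R X dl)))

/-- `𝒳` is closed under tensor products. -/
def ClosedUnderTensor (R : Type) [CommRing R] (𝒳 : Set (ModuleCat.{0} R)) : Prop :=
  ∀ X ∈ 𝒳, ∀ Y ∈ 𝒳, ModuleCat.of R (TensorProduct R X Y) ∈ 𝒳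

/-- `𝒳` is closed under (Auslander) transposes. -/
def ClosedUnderTranspose (R : Type) [CommRing R] [IsLocalRing R]
    (𝒳 : Set (ModuleCat.{0} R)) : Prop :=
  ∀ M ∈ 𝒳, ∀ T : ModuleCat.{0} R, IsTransposeOf R R M T → T ∈ 𝒳


/-- The subcategory `add R` of direct summands of finitely generated free modules. -/
def addRCat (R : Type) [CommRing R] : Set (ModuleCat.{0} R) :=
  {M | ∃ (n : ℕ) (i : M →ₗ[R] (Fin n → R)) (p : (Fin n → R) →ₗ[R] M),
    p ∘ₗ i = LinearMap.id}

/-- A thick subcategory of `CM(R)`: closed under isomorphisms and direct summands, and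
satisfying two-out-of-three for short exact sequences of Cohen-Macaulay modules. -/
structure IsThickCM (R : Type) [CommRing R] [IsLocalRing R]
    (𝒳 : Set (ModuleCat.{0} R)) : Prop where
  subset_cm : 𝒳 ⊆ CMcat R
  mem_of_iso : ∀ M N : ModuleCat.{0} R, Nonempty (M ≃ₗ[R] N) → M ∈ 𝒳 → N ∈ 𝒳
  summand_mem : ∀ M N : ModuleCat.{0} R,
    (∃ (i : N →ₗ[R] M) (p : M →ₗ[R] N), p ∘ₗ i = LinearMap.id) → M ∈ 𝒳 → N ∈ 𝒳
  two_of_three : ∀ (L M N : ModuleCat.{0} R), L ∈ CMcat R → M ∈ CMcat R → N ∈ CMcat R →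
    ∀ (f : L →ₗ[R] M) (g : M →ₗ[R] N),
      Function.Injective f → Function.Surjective g → Function.Exact f g →
        ((L ∈ 𝒳 → M ∈ 𝒳 → N ∈ 𝒳) ∧ (L ∈ 𝒳 → N ∈ 𝒳 → M ∈ 𝒳) ∧ (M ∈ 𝒳 → N ∈ 𝒳 → L ∈ 𝒳))

/-- A local ring with infinite residue field has minimal multiplicity iff the square of the
maximal ideal equals `Q * m` for a parameter ideal `Q = (x_1, …, x_d)` generated by
`d = dim` many elements of `m`. -/
def HasMinimalMultiplicity (A : Type) [CommRing A] [IsLocalRing A] : Prop :=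
  ∃ (n : ℕ) (x : Fin n → A), ringKrullDim A = (n : ℕ) ∧
    (∀ i, x i ∈ IsLocalRing.maximalIdeal A) ∧
    (IsLocalRing.maximalIdeal A) ^ 2 =
      Ideal.span (Set.range x) * IsLocalRing.maximalIdeal A

/-! ### Resolving subcategories and modules of `𝒳`-dimension at most one -/

section Resolving

variable {R : Type} [CommRing R] {𝒳 : Set (ModuleCat.{0} R)}

namespace IsResolving

variable {L M N : Type} [AddCommGroup L] [Module R L] [AddCommGroup M] [Module R M]
  [AddCommGroup N] [Module R N]

lemma finite (h : IsResolving R 𝒳) (hM : ModuleCat.of R M ∈ 𝒳) : Module.Finite R M :=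
  h.fg _ hM

lemma congr (h : IsResolving R 𝒳) (e : M ≃ₗ[R] N) (hM : ModuleCat.of R M ∈ 𝒳) :
    ModuleCat.of R N ∈ 𝒳 :=
  h.mem_of_iso (.of R M) (.of R N) ⟨e⟩ hM

lemma retract (h : IsResolving R 𝒳) (i : N →ₗ[R] M) (p : M →ₗ[R] N)
    (hpi : ∀ x, p (i x) = x) (hM : ModuleCat.of R M ∈ 𝒳) : ModuleCat.of R N ∈ 𝒳 :=
  h.summand_mem (.of R M) (.of R N) ⟨i, p, LinearMap.ext hpi⟩ hM

lemma ext (h : IsResolving R 𝒳) (f : L →ₗ[R] M) (g : M →ₗ[R] N)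
    (hf : Function.Injective f) (hg : Function.Surjective g) (hfg : Function.Exact f g)
    (hL : ModuleCat.of R L ∈ 𝒳) (hN : ModuleCat.of R N ∈ 𝒳) : ModuleCat.of R M ∈ 𝒳 :=
  h.extension_mem (.of R L) (.of R M) (.of R N) f g hf hg hfg hL hN

lemma left (h : IsResolving R 𝒳) (f : L →ₗ[R] M) (g : M →ₗ[R] N)
    (hf : Function.Injective f) (hg : Function.Surjective g) (hfg : Function.Exact f g)
    (hM : ModuleCat.of R M ∈ 𝒳) (hN : ModuleCat.of R N ∈ 𝒳) : ModuleCat.of R L ∈ 𝒳 :=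
  h.ker_epi_mem (.of R L) (.of R M) (.of R N) f g hf hg hfg hM hN

lemma subsingleton (h : IsResolving R 𝒳) [Subsingleton M] : ModuleCat.of R M ∈ 𝒳 :=
  h.retract (M := R) 0 0 (fun _ => Subsingleton.elim _ _) h.ring_mem

lemma prod (h : IsResolving R 𝒳) (hM : ModuleCat.of R M ∈ 𝒳) (hN : ModuleCat.of R N ∈ 𝒳) :
    ModuleCat.of R (M × N) ∈ 𝒳 :=
  h.ext (LinearMap.inl R M N) (LinearMap.snd R M N) LinearMap.inl_injective
    LinearMap.snd_surjective (Function.Exact.inl_snd) hM hN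

lemma fin_fun (h : IsResolving R 𝒳) (n : ℕ) : ModuleCat.of R (Fin n → R) ∈ 𝒳 := by
  induction n with
  | zero => exact h.subsingleton
  | succ n ih =>
    exact h.congr (Fin.consLinearEquiv R (fun _ : Fin (n + 1) => R)) (h.prod h.ring_mem ih)

end IsResolving

/-- The modules `M` of `𝒳`-dimension at most one: those with a short exact sequence
`0 → A → B → M → 0` where `A` and `B` belong to `𝒳`. -/
def dimLEOne (𝒳 : Set (ModuleCat.{0} R)) : Set (ModuleCat.{0} R) :=
  {M | ∃ (B : ModuleCat.{0} R) (g : B →ₗ[R] M), Function.Surjective g ∧ B ∈ 𝒳 ∧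
    ModuleCat.of R (LinearMap.ker g) ∈ 𝒳}

section

variable {A B C L M N : Type} [AddCommGroup A] [Module R A] [AddCommGroup B] [Module R B]
  [AddCommGroup C] [Module R C] [AddCommGroup L] [Module R L] [AddCommGroup M] [Module R M]
  [AddCommGroup N] [Module R N]

lemma dimLEOne_of_exact (h : IsResolving R 𝒳) (f : A →ₗ[R] B) (g : B →ₗ[R] C)
    (hf : Function.Injective f) (hg : Function.Surjective g) (hfg : Function.Exact f g)
    (hA : ModuleCat.of R A ∈ 𝒳) (hB : ModuleCat.of R B ∈ 𝒳) :
    ModuleCat.of R C ∈ dimLEOne 𝒳 := by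
  refine ⟨.of R B, g, hg, hB, ?_⟩
  have e : A ≃ₗ[R] LinearMap.ker g :=
    (LinearEquiv.ofInjective f hf).trans (LinearEquiv.ofEq _ _ hfg.linearMap_ker_eq.symm)
  exact h.congr e hA

lemma dimLEOne_of_mem (h : IsResolving R 𝒳) (hC : ModuleCat.of R C ∈ 𝒳) :
    ModuleCat.of R C ∈ dimLEOne 𝒳 :=
  dimLEOne_of_exact h (0 : PUnit →ₗ[R] C) LinearMap.id (Function.injective_of_subsingleton _)
    Function.surjective_id (by rw [LinearMap.exact_iff]; simp) h.subsingleton hC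

/-- Any epimorphism from an object of `𝒳` onto a module of `𝒳`-dimension at most one has its
kernel in `𝒳`: pull the epimorphism back along a resolution of the target. -/
lemma ker_mem_of_dimLEOne (h : IsResolving R 𝒳) (f : A →ₗ[R] B) (g : B →ₗ[R] C)
    (hf : Function.Injective f) (hg : Function.Surjective g) (hfg : Function.Exact f g)
    (hB : ModuleCat.of R B ∈ 𝒳) (hC : ModuleCat.of R C ∈ dimLEOne 𝒳) :
    ModuleCat.of R A ∈ 𝒳 := by
  obtain ⟨B', g', hg', hB', hK⟩ := hC
  change B' →ₗ[R] C at g'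
  let E : Submodule R (B × B') :=
    LinearMap.eqLocus (g ∘ₗ LinearMap.fst R B B') (g' ∘ₗ LinearMap.snd R B B')
  have hE : ModuleCat.of R E ∈ 𝒳 := by
    refine h.ext (L := LinearMap.ker g') (N := B)
      ((LinearMap.inr R B B' ∘ₗ (LinearMap.ker g').subtype).codRestrict E ?_)
      (LinearMap.fst R B B' ∘ₗ E.subtype) ?_ ?_ ?_ hK hB
    · rintro ⟨x, hx⟩
      have : g' x = 0 := hx
      simp [E, this]
    · intro x y hxy
      exact Subtype.ext (congrArg (fun e : E => e.1.2) hxy)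
    · intro b
      obtain ⟨b', hb'⟩ := hg' (g b)
      exact ⟨⟨(b, b'), by simp [E, hb']⟩, rfl⟩
    · rintro ⟨⟨b, b'⟩, hb⟩
      have hb : g b = g' b' := hb
      constructor
      · intro hb0
        have hb0 : b = 0 := hb0
        subst hb0
        exact ⟨⟨b', by simpa using hb.symm⟩, rfl⟩
      · rintro ⟨x, hx⟩
        exact (congrArg (fun e : E => e.1.1) hx).symm
  refine h.left (M := E) (N := B')
    ((LinearMap.inl R B B' ∘ₗ f).codRestrict E ?_)
    (LinearMap.snd R B B' ∘ₗ E.subtype) ?_ ?_ ?_ hE hB'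
  · intro x
    simp [E, hfg.apply_apply_eq_zero]
  · intro x y hxy
    exact hf (congrArg (fun e : E => e.1.1) hxy)
  · intro b'
    obtain ⟨b, hb⟩ := hg (g' b')
    exact ⟨⟨(b, b'), by simp [E, hb]⟩, rfl⟩
  · rintro ⟨⟨b, b'⟩, hb⟩
    have hb : g b = g' b' := hb
    constructor
    · intro hb0
      have hb0 : b' = 0 := hb0
      subst hb0
      obtain ⟨a, rfl⟩ := (hfg b).1 (by simpa using hb)
      exact ⟨a, rfl⟩
    · rintro ⟨x, hx⟩
      exact (congrArg (fun e : E => e.1.2) hx).symm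

/-- For a short exact sequence `0 → L → M → N → 0` and an epimorphism `π : F → M`, the kernel `K`
of `F → N` surjects onto `L`, with the same kernel as `π`. -/
lemma exists_ker_comp (f : L →ₗ[R] M) (g : M →ₗ[R] N)
    (hf : Function.Injective f) (hfg : Function.Exact f g)
    {F : Type} [AddCommGroup F] [Module R F] (π : F →ₗ[R] M) (hπ : Function.Surjective π) :
    ∃ (i : LinearMap.ker π →ₗ[R] LinearMap.ker (g ∘ₗ π))
      (q : LinearMap.ker (g ∘ₗ π) →ₗ[R] L),
      Function.Injective i ∧ Function.Surjective q ∧ Function.Exact i q := by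
  let e : L ≃ₗ[R] LinearMap.ker g :=
    (LinearEquiv.ofInjective f hf).trans (LinearEquiv.ofEq _ _ hfg.linearMap_ker_eq.symm)
  let q₀ : LinearMap.ker (g ∘ₗ π) →ₗ[R] LinearMap.ker g :=
    (π ∘ₗ (LinearMap.ker (g ∘ₗ π)).subtype).codRestrict _ (fun x => x.2)
  refine ⟨Submodule.inclusion (fun x hx => ?_), e.symm.toLinearMap ∘ₗ q₀,
    Submodule.inclusion_injective _, e.symm.surjective.comp ?_, ?_⟩
  · simp only [LinearMap.mem_ker, LinearMap.comp_apply] at hx ⊢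
    simp [hx]
  · rintro ⟨m, hm⟩
    obtain ⟨x, rfl⟩ := hπ m
    exact ⟨⟨x, hm⟩, rfl⟩
  · rintro ⟨x, hx⟩
    simp only [LinearMap.comp_apply, LinearEquiv.coe_coe, LinearEquiv.map_eq_zero_iff]
    constructor
    · intro h0
      have h0 : π x = 0 := congrArg Subtype.val h0
      exact ⟨⟨x, h0⟩, rfl⟩
    · rintro ⟨y, hy⟩
      have : (y : F) = x := congrArg Subtype.val hy
      apply Subtype.ext
      change π x = 0
      rw [← this]
      exact y.2

lemma isResolving_dimLEOne [IsNoetherianRing R] (h : IsResolving R 𝒳) :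
    IsResolving R (dimLEOne 𝒳) := by
  have hfin : ∀ M ∈ dimLEOne 𝒳, Module.Finite R M := by
    rintro M ⟨B, g, hg, hB, -⟩
    have := h.fg _ hB
    exact Module.Finite.of_surjective g hg
  -- the kernel of an epimorphism from a module in `𝒳` onto one in `dimLEOne 𝒳` lies in `𝒳`
  have key {B C : Type} [AddCommGroup B] [Module R B] [AddCommGroup C] [Module R C]
      (g : B →ₗ[R] C) (hg : Function.Surjective g) (hB : ModuleCat.of R B ∈ 𝒳)
      (hC : ModuleCat.of R C ∈ dimLEOne 𝒳) : ModuleCat.of R (LinearMap.ker g) ∈ 𝒳 :=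
    ker_mem_of_dimLEOne h _ g (LinearMap.ker g).injective_subtype hg
      (LinearMap.exact_subtype_ker_map g) hB hC
  refine ⟨hfin, ?_, dimLEOne_of_mem h h.ring_mem, ?_, ?_, ?_⟩
  · rintro M N ⟨e⟩ ⟨B, g, hg, hB, hK⟩
    refine ⟨B, e.toLinearMap ∘ₗ g, e.surjective.comp hg, hB, ?_⟩
    exact h.congr (LinearEquiv.ofEq _ _ (LinearEquiv.ker_comp e g).symm) hK
  · rintro M N ⟨i, p, hpi⟩ hM
    have hpi' : ∀ x, p (i x) = x := fun x => LinearMap.congr_fun hpi x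
    have := hfin M hM
    have hp : Function.Surjective p := fun x => ⟨i x, hpi' x⟩
    have := Module.Finite.of_surjective p hp
    obtain ⟨n, a, ha⟩ := Module.Finite.exists_fin' R N
    obtain ⟨m, b, hb⟩ := Module.Finite.exists_fin' R (LinearMap.ker p)
    let c : ((Fin n → R) × (Fin m → R)) →ₗ[R] M :=
      (i ∘ₗ a).coprod ((LinearMap.ker p).subtype ∘ₗ b)
    have hc : Function.Surjective c := by
      intro x
      obtain ⟨u, hu⟩ := ha (p x)
      obtain ⟨v, hv⟩ := hb ⟨x - i (p x), by simp [hpi']⟩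
      refine ⟨(u, v), ?_⟩
      simp [c, hu, hv]
    have hker := key c hc (h.prod (h.fin_fun n) (h.fin_fun m)) hM
    refine ⟨.of R (Fin n → R), a, ha, h.fin_fun n, ?_⟩
    refine h.retract (M := LinearMap.ker c) (N := LinearMap.ker a)
      ((LinearMap.inl R _ _ ∘ₗ (LinearMap.ker a).subtype).codRestrict _ ?_)
      ((LinearMap.fst R _ _ ∘ₗ (LinearMap.ker c).subtype).codRestrict _ ?_) ?_ hker
    · rintro ⟨x, hx⟩
      have hx : a x = 0 := hx
      simp [c, hx]
    · rintro ⟨⟨u, v⟩, huv⟩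
      have huv : i (a u) + (b v : M) = 0 := huv
      have h2 := congrArg p huv
      have h3 : p (b v : M) = 0 := (b v).2
      rw [map_add, hpi', h3, add_zero, map_zero] at h2
      exact h2
    · intro x
      rfl
  · intro L M N f g hf hg hfg hL hN
    have := hfin L hL
    have := hfin N hN
    have : Module.Finite R M := Module.Finite.of_exact hfg hg
    obtain ⟨n, π, hπ⟩ := Module.Finite.exists_fin' R M
    obtain ⟨i, q, hi, hq, hiq⟩ := exists_ker_comp f g hf hfg π hπ
    refine ⟨.of R (Fin n → R), π, hπ, h.fin_fun n, ?_⟩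
    exact ker_mem_of_dimLEOne h i q hi hq hiq
      (key (g ∘ₗ π) (hg.comp hπ) (h.fin_fun n) hN) hL
  · intro L M N f g hf hg hfg hM hN
    have := hfin M hM
    obtain ⟨n, π, hπ⟩ := Module.Finite.exists_fin' R M
    obtain ⟨i, q, hi, hq, hiq⟩ := exists_ker_comp f g hf hfg π hπ
    exact dimLEOne_of_exact h i q hi hq hiq (key π hπ (h.fin_fun n) hM)
      (key (g ∘ₗ π) (hg.comp hπ) (h.fin_fun n) hN)

/-- If multiplication by `s` on `N` factors through an object of `𝒳`, then there is an exact
sequence `0 → (0 :_N s) → N ⊕ W → Y → N/sN → 0` with `Y ∈ 𝒳`, because the pullback along `s` of an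
epimorphism `Y → N` through which `s` factors is split. Hence `N` lies in `𝒳` as soon as
`(0 :_N s) ∈ 𝒳` and `N/sN` has `𝒳`-dimension at most one. -/
lemma mem_of_factor (h : IsResolving R 𝒳) [Module.Finite R N] (s : R)
    {Y : Type} [AddCommGroup Y] [Module R Y] (hY : ModuleCat.of R Y ∈ 𝒳)
    (a : N →ₗ[R] Y) (b : Y →ₗ[R] N) (hab : ∀ x, b (a x) = s • x)
    (hT : ModuleCat.of R (Submodule.torsionBy R N s) ∈ 𝒳)
    (hQ : ModuleCat.of R (QuotSMulTop s N) ∈ dimLEOne 𝒳) : ModuleCat.of R N ∈ 𝒳 := by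
  obtain ⟨n, π, hπ⟩ := Module.Finite.exists_fin' R N
  let β : (Y × (Fin n → R)) →ₗ[R] N := b.coprod π
  have hβ : Function.Surjective β := fun x => by
    obtain ⟨u, hu⟩ := hπ x
    exact ⟨(0, u), by simp [β, hu]⟩
  let γ : (Y × (Fin n → R)) →ₗ[R] QuotSMulTop s N := Submodule.mkQ _ ∘ₗ β
  have hγ : Function.Surjective γ := (Submodule.mkQ_surjective _).comp hβ
  have hγmem : ∀ y, γ y = 0 ↔ ∃ x : N, s • x = β y := by
    intro y
    change Submodule.Quotient.mk (β y) = 0 ↔ _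
    rw [Submodule.Quotient.mk_eq_zero, Submodule.mem_smul_pointwise_iff_exists]
    simp
  have hL : ModuleCat.of R (LinearMap.ker γ) ∈ 𝒳 :=
    ker_mem_of_dimLEOne h _ γ (LinearMap.ker γ).injective_subtype hγ
      (LinearMap.exact_subtype_ker_map γ) (h.prod hY (h.fin_fun n)) hQ
  have hβa : ∀ x, β (a x, 0) = s • x := fun x => by simp [β, hab]
  let φ : (LinearMap.ker β × N) →ₗ[R] LinearMap.ker γ :=
    ((LinearMap.ker β).subtype.coprod (LinearMap.inl R Y (Fin n → R) ∘ₗ a)).codRestrict _ (by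
      rintro ⟨⟨w, hw⟩, x⟩
      have hw : β w = 0 := hw
      rw [LinearMap.mem_ker, hγmem]
      exact ⟨x, by simp [hw, hβa]⟩)
  have hφ : ∀ (w : LinearMap.ker β) (x : N), ((φ (w, x) : LinearMap.ker γ) : Y × (Fin n → R))
      = (w : Y × (Fin n → R)) + (a x, 0) := fun w x => rfl
  let ψ : Submodule.torsionBy R N s →ₗ[R] (LinearMap.ker β × N) :=
    LinearMap.prod ((-(LinearMap.inl R Y (Fin n → R) ∘ₗ a ∘ₗ
      (Submodule.torsionBy R N s).subtype)).codRestrict _ (by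
        rintro ⟨x, hx⟩
        have hx : s • x = 0 := by simpa using hx
        have hneg : β (-(a x, 0)) = 0 := by rw [map_neg, hβa, hx, neg_zero]
        exact hneg)) (Submodule.torsionBy R N s).subtype
  have hmem : ModuleCat.of R (LinearMap.ker β × N) ∈ 𝒳 := by
    refine h.ext ψ φ ?_ ?_ ?_ hT hL
    · intro x y hxy
      exact Subtype.ext (congrArg Prod.snd hxy)
    · rintro ⟨y, hy⟩
      obtain ⟨x, hx⟩ := (hγmem y).1 hy
      refine ⟨(⟨y - (a x, 0), by simp [hβa, hx]⟩, x), Subtype.ext ?_⟩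
      simp [hφ]
    · rintro ⟨w, x⟩
      constructor
      · intro h0
        have h1 : (w : Y × (Fin n → R)) + (a x, 0) = 0 := congrArg Subtype.val h0
        have h2 : s • x = 0 := by
          have := congrArg β h1
          rw [map_add, hβa, map_zero, LinearMap.mem_ker.1 w.2, zero_add] at this
          exact this
        refine ⟨⟨x, by simpa using h2⟩, Prod.ext (Subtype.ext ?_) rfl⟩
        exact (eq_neg_of_add_eq_zero_left h1).symm
      · rintro ⟨y, hy⟩
        rw [← hy]
        apply Subtype.ext
        change -(a y, (0 : Fin n → R)) + (a y, 0) = 0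
        exact neg_add_cancel _
  exact h.retract (LinearMap.inr R (LinearMap.ker β) N) (LinearMap.snd R _ _) (fun _ => rfl) hmem

end

end Resolving

/-! ### Regular sequences and depth -/

section Depth

open IsLocalRing

variable {R : Type} [CommRing R]

section

variable {M : Type} [AddCommGroup M] [Module R M]

lemma quotSMulTop_mk_eq_zero_iff (x : R) (u : M) :
    (Submodule.Quotient.mk u : QuotSMulTop x M) = 0 ↔ ∃ v, x • v = u := by
  rw [Submodule.Quotient.mk_eq_zero, Submodule.mem_smul_pointwise_iff_exists]
  simp

lemma isSMulRegular_quotSMulTop_iff (x z : R) :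
    IsSMulRegular (QuotSMulTop x M) z ↔ ∀ u v : M, z • u = x • v → ∃ w, x • w = u := by
  rw [isSMulRegular_iff_right_eq_zero_of_smul]
  constructor
  · intro h u v huv
    rw [← quotSMulTop_mk_eq_zero_iff]
    apply h
    rw [← Submodule.Quotient.mk_smul, quotSMulTop_mk_eq_zero_iff]
    exact ⟨v, huv.symm⟩
  · intro h q
    induction q using Submodule.Quotient.induction_on with
    | H u =>
      rw [← Submodule.Quotient.mk_smul, quotSMulTop_mk_eq_zero_iff, quotSMulTop_mk_eq_zero_iff]
      rintro ⟨v, hv⟩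
      exact h u v hv.symm

lemma smul_quotSMulTop_eq_zero (y : R) (q : QuotSMulTop y M) : y • q = 0 := by
  induction q using Submodule.Quotient.induction_on with
  | H u =>
    rw [← Submodule.Quotient.mk_smul, quotSMulTop_mk_eq_zero_iff]
    exact ⟨u, rfl⟩

open Pointwise in
/-- The natural map `(M/xM)/yM → (M/yM)/xM`. -/
def quotSwap (M : Type) [AddCommGroup M] [Module R M] (x y : R) :
    QuotSMulTop y (QuotSMulTop x M) →ₗ[R] QuotSMulTop x (QuotSMulTop y M) :=
  Submodule.liftQ _ (QuotSMulTop.map x (y • (⊤ : Submodule R M)).mkQ) (by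
    intro u hu
    obtain ⟨v, -, rfl⟩ := (Submodule.mem_smul_pointwise_iff_exists _ _ _).1 hu
    rw [LinearMap.mem_ker, map_smul]
    generalize QuotSMulTop.map x (y • (⊤ : Submodule R M)).mkQ v = w
    induction w using Submodule.Quotient.induction_on with
    | H w =>
      rw [← Submodule.Quotient.mk_smul]
      have hw : y • w = 0 := smul_quotSMulTop_eq_zero y w
      rw [hw]
      rfl)

lemma quotSwap_quotSwap (x y : R) (q : QuotSMulTop y (QuotSMulTop x M)) :
    quotSwap M y x (quotSwap M x y q) = q := by
  induction q using Submodule.Quotient.induction_on with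
  | H q =>
    induction q using Submodule.Quotient.induction_on with
    | H q => rfl

/-- The isomorphism `(M/xM)/yM ≃ (M/yM)/xM`. -/
def quotSwapEquiv (M : Type) [AddCommGroup M] [Module R M] (x y : R) :
    QuotSMulTop y (QuotSMulTop x M) ≃ₗ[R] QuotSMulTop x (QuotSMulTop y M) where
  __ := quotSwap M x y
  invFun := quotSwap M y x
  left_inv := quotSwap_quotSwap x y
  right_inv := quotSwap_quotSwap y x

lemma isSMulRegular_quot_swap {y z : R} (hy : IsSMulRegular M y)
    (hz : IsSMulRegular (QuotSMulTop y M) z) : IsSMulRegular (QuotSMulTop z M) y := by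
  rw [isSMulRegular_quotSMulTop_iff] at hz ⊢
  intro u v huv
  obtain ⟨w, rfl⟩ := hz v u huv.symm
  exact ⟨w, hy (by simp only; rw [huv, smul_comm])⟩

lemma isSMulRegular_of_forall_notMem [IsNoetherianRing R] {z : R}
    (hz : ∀ p ∈ associatedPrimes R M, z ∉ p) : IsSMulRegular M z := by
  by_contra hcon
  have : z ∈ ({r : R | IsSMulRegular M r}ᶜ : Set R) := hcon
  rw [← biUnion_associatedPrimes_eq_compl_regular R M] at this
  simp only [Set.mem_iUnion] at this
  obtain ⟨p, hp, hzp⟩ := this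
  exact hz p hp hzp

lemma notMem_of_isSMulRegular [IsNoetherianRing R] {z : R} (hz : IsSMulRegular M z)
    {p : Ideal R} (hp : p ∈ associatedPrimes R M) : z ∉ p := by
  intro hzp
  have : z ∈ ⋃ p ∈ associatedPrimes R M, (p : Set R) := by
    simp only [Set.mem_iUnion]
    exact ⟨p, hp, hzp⟩
  rw [biUnion_associatedPrimes_eq_compl_regular R M] at this
  exact this hz

lemma exists_mem_forall_notMem (I : Ideal R) {S : Set (Ideal R)} (hS : S.Finite)
    (hprime : ∀ p ∈ S, p.IsPrime) (hI : ∀ p ∈ S, ¬ I ≤ p) : ∃ z ∈ I, ∀ p ∈ S, z ∉ p := by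
  by_contra! hcon
  obtain ⟨p, hp, hIp⟩ := (Ideal.subset_union_prime_finite hS (f := id) 0 0
    (fun p hp _ _ => hprime p hp) (I := I)).1 (fun z hz => by
      obtain ⟨p, hp, hzp⟩ := hcon z hz
      simp only [Set.mem_iUnion]
      exact ⟨p, hp, hzp⟩)
  exact hI p hp hIp

end

variable [IsLocalRing R]

/-- `M` has a weakly regular sequence of length `n` in the maximal ideal. -/
def DepthGE (R : Type) [CommRing R] [IsLocalRing R] (n : ℕ) (M : Type) [AddCommGroup M]
    [Module R M] : Prop :=
  ∃ rs : List R, rs.length = n ∧ (∀ r ∈ rs, r ∈ maximalIdeal R) ∧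
    RingTheory.Sequence.IsWeaklyRegular M rs

variable {M : Type} [AddCommGroup M] [Module R M]

lemma depthGE_zero : DepthGE R 0 M := ⟨[], rfl, by simp, by simp⟩

lemma depthGE_succ_iff {n : ℕ} : DepthGE R (n + 1) M ↔
    ∃ x ∈ maximalIdeal R, IsSMulRegular M x ∧ DepthGE R n (QuotSMulTop x M) := by
  constructor
  · rintro ⟨rs, hlen, hmem, hreg⟩
    match rs, hlen, hmem, hreg with
    | x :: rs, hlen, hmem, hreg =>
      rw [RingTheory.Sequence.isWeaklyRegular_cons_iff] at hreg
      exact ⟨x, hmem x (by simp), hreg.1, rs, by simpa using hlen,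
        fun r hr => hmem r (by simp [hr]), hreg.2⟩
  · rintro ⟨x, hx, hxr, rs, hlen, hmem, hreg⟩
    refine ⟨x :: rs, by simp [hlen], ?_, (RingTheory.Sequence.isWeaklyRegular_cons_iff _ _ _).2
      ⟨hxr, hreg⟩⟩
    intro r hr
    rcases List.mem_cons.1 hr with rfl | hr
    · exact hx
    · exact hmem r hr

lemma DepthGE.congr {N : Type} [AddCommGroup N] [Module R N] {n : ℕ} (e : M ≃ₗ[R] N)
    (h : DepthGE R n M) : DepthGE R n N := by
  obtain ⟨rs, hlen, hmem, hreg⟩ := h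
  exact ⟨rs, hlen, hmem, (e.isWeaklyRegular_congr rs).1 hreg⟩

variable [IsNoetherianRing R]

lemma maximalIdeal_notMem_of_depthGE {n : ℕ} (h : DepthGE R (n + 1) M) :
    maximalIdeal R ∉ associatedPrimes R M := by
  obtain ⟨x, hx, hxr, -⟩ := depthGE_succ_iff.1 h
  exact fun hm => notMem_of_isSMulRegular hxr hm hx

/-- Whether the maximal ideal is associated to `M/xM` does not depend on the regular element `x`:
if `y` is a regular element of the maximal ideal, a socle element of `M/xM` yields one of
`M/yM`. -/
lemma maximalIdeal_notMem_quot {x y : R} (hx : IsSMulRegular M x) (hy : IsSMulRegular M y)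
    (hym : y ∈ maximalIdeal R)
    (h : maximalIdeal R ∉ associatedPrimes R (QuotSMulTop y M)) :
    maximalIdeal R ∉ associatedPrimes R (QuotSMulTop x M) := by
  intro hm
  obtain ⟨-, q, hq⟩ := (isAssociatedPrime_iff).1 (AssociatedPrimes.mem_iff.1 hm)
  induction q using Submodule.Quotient.induction_on with
  | H u =>
    have hmu : ∀ r ∈ maximalIdeal R, ∃ v, x • v = r • u := by
      intro r hr
      rw [hq, Submodule.mem_colon_singleton, Submodule.mem_bot, ← Submodule.Quotient.mk_smul,
        quotSMulTop_mk_eq_zero_iff] at hr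
      exact hr
    have hu : ¬ ∃ v, x • v = u := by
      intro hu
      rw [← quotSMulTop_mk_eq_zero_iff] at hu
      have : (1 : R) ∈ maximalIdeal R := by
        rw [hq, Submodule.mem_colon_singleton, hu]
        simp
      exact (maximalIdeal.isMaximal R).ne_top ((Ideal.eq_top_iff_one _).2 this)
    obtain ⟨v, hv⟩ := hmu y hym
    have hmv : ∀ r ∈ maximalIdeal R, ∃ w, y • w = r • v := by
      intro r hr
      obtain ⟨w, hw⟩ := hmu r hr
      refine ⟨w, hx ?_⟩
      simp only
      rw [smul_comm x y w, hw, smul_comm x r v, hv, smul_comm]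
    have hv0 : (Submodule.Quotient.mk v : QuotSMulTop y M) ≠ 0 := by
      rw [Ne, quotSMulTop_mk_eq_zero_iff]
      rintro ⟨w, rfl⟩
      refine hu ⟨w, hy ?_⟩
      simp only
      rw [← hv, smul_comm]
    obtain ⟨P, hP, hle⟩ := exists_le_isAssociatedPrime_of_isNoetherianRing R _ hv0
    have hmP : maximalIdeal R ≤ P := by
      refine le_trans (fun r hr => ?_) hle
      rw [Submodule.mem_colon_singleton, Submodule.mem_bot, ← Submodule.Quotient.mk_smul,
        quotSMulTop_mk_eq_zero_iff]
      exact hmv r hr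
    rw [(maximalIdeal.isMaximal R).eq_of_le hP.isPrime.ne_top hmP] at h
    exact h hP

/-- Dividing by a regular element of the maximal ideal lowers the depth by at most one. -/
lemma DepthGE.quotSMulTop {n : ℕ} {M : Type} [AddCommGroup M] [Module R M] [Module.Finite R M]
    {x : R} (hxm : x ∈ maximalIdeal R) (hx : IsSMulRegular M x) (h : DepthGE R (n + 1) M) :
    DepthGE R n (QuotSMulTop x M) := by
  induction n generalizing M x with
  | zero => exact depthGE_zero
  | succ n ih =>
    have hM := maximalIdeal_notMem_of_depthGE h
    obtain ⟨y, hym, hy, hMy⟩ := depthGE_succ_iff.1 h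
    have hMy' := maximalIdeal_notMem_of_depthGE hMy
    have hMx' := maximalIdeal_notMem_quot hx hy hym hMy'
    -- a common regular element `z` on `M/xM` and `M/yM` allows `x` to be exchanged for `y`
    obtain ⟨z, hzm, hz⟩ := exists_mem_forall_notMem (maximalIdeal R)
      (S := associatedPrimes R M ∪ (associatedPrimes R (QuotSMulTop y M) ∪
        associatedPrimes R (QuotSMulTop x M)))
      ((associatedPrimes.finite R _).union
        ((associatedPrimes.finite R _).union (associatedPrimes.finite R _)))
      (by rintro p (hp | hp | hp) <;> exact hp.isPrime)
      (by
        intro p hp hle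
        have hprime : p.IsPrime := by rcases hp with hp | hp | hp <;> exact hp.isPrime
        rw [← (maximalIdeal.isMaximal R).eq_of_le hprime.ne_top hle] at hp
        rcases hp with hp | hp | hp
        · exact hM hp
        · exact hMy' hp
        · exact hMx' hp)
    have hz0 : IsSMulRegular M z := isSMulRegular_of_forall_notMem fun p hp => hz p (Or.inl hp)
    have hzy : IsSMulRegular (QuotSMulTop y M) z :=
      isSMulRegular_of_forall_notMem fun p hp => hz p (Or.inr (Or.inl hp))
    have hzx : IsSMulRegular (QuotSMulTop x M) z :=
      isSMulRegular_of_forall_notMem fun p hp => hz p (Or.inr (Or.inr hp))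
    have h1 : DepthGE R n (QuotSMulTop y (QuotSMulTop z M)) :=
      (ih hzm hzy hMy).congr (quotSwapEquiv M y z)
    have h2 : DepthGE R (n + 1) (QuotSMulTop z M) :=
      depthGE_succ_iff.2 ⟨y, hym, isSMulRegular_quot_swap hy hzy, h1⟩
    have h3 : DepthGE R n (QuotSMulTop x (QuotSMulTop z M)) :=
      ih hxm (isSMulRegular_quot_swap hx hzx) h2
    exact depthGE_succ_iff.2 ⟨z, hzm, hzx, h3.congr (quotSwapEquiv M z x)⟩

/-- The depth of `M` is at most the dimension of `R/p` for every associated prime `p` of `M`. -/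
lemma DepthGE.le_coheight {n : ℕ} {M : Type} [AddCommGroup M] [Module R M] [Module.Finite R M]
    (h : DepthGE R n M) (p : PrimeSpectrum R) (hp : p.asIdeal ∈ associatedPrimes R M) :
    (n : ℕ∞) ≤ Order.coheight p := by
  induction n generalizing M p with
  | zero => simp
  | succ n ih =>
    obtain ⟨x, hxm, hx, hMx⟩ := depthGE_succ_iff.1 h
    obtain ⟨-, u, hu⟩ := (isAssociatedPrime_iff).1 (AssociatedPrimes.mem_iff.1 hp)
    have hmem : ∀ r, r ∈ p.asIdeal ↔ r • u = 0 := fun r => by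
      rw [hu, Submodule.mem_colon_singleton, Submodule.mem_bot]
    let N : Submodule R M := Submodule.torsionBySet R M (p.asIdeal : Set R)
    have hN : ∀ v, v ∈ N ↔ ∀ r ∈ p.asIdeal, r • v = 0 := fun v => by
      simp [N, Submodule.mem_torsionBySet_iff]
    -- by Nakayama, the submodule of elements killed by `p` is not contained in `xM`
    obtain ⟨v, hvN, hv⟩ : ∃ v ∈ N, ¬ ∃ w, x • w = v := by
      by_contra! hcon
      have hle : N ≤ maximalIdeal R • N := by
        intro v hv
        obtain ⟨w, rfl⟩ := hcon v hv
        refine Submodule.smul_mem_smul hxm ((hN w).2 fun r hr => hx ?_)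
        simp only
        rw [smul_comm, (hN _).1 hv r hr, smul_zero]
      have hbot : N = ⊥ := Submodule.eq_bot_of_le_smul_of_le_jacobson_bot (maximalIdeal R) N
        (IsNoetherian.noetherian N) hle (IsLocalRing.maximalIdeal_le_jacobson _)
      have huN : u ∈ N := (hN u).2 fun r hr => (hmem r).1 hr
      rw [hbot, Submodule.mem_bot] at huN
      exact p.2.ne_top ((Ideal.eq_top_iff_one _).2 ((hmem 1).2 (by simp [huN])))
    rw [← quotSMulTop_mk_eq_zero_iff] at hv
    obtain ⟨P, hP, hle⟩ := exists_le_isAssociatedPrime_of_isNoetherianRing R _ hv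
    have hPprime := hP.isPrime
    have hxP : x ∈ P := hle (by
      rw [Submodule.mem_colon_singleton, Submodule.mem_bot, ← Submodule.Quotient.mk_smul,
        quotSMulTop_mk_eq_zero_iff]
      exact ⟨v, rfl⟩)
    have hpP : p.asIdeal ≤ P := fun r hr => hle (by
      rw [Submodule.mem_colon_singleton, Submodule.mem_bot, ← Submodule.Quotient.mk_smul,
        (hN v).1 hvN r hr]
      rfl)
    have hlt : p < ⟨P, hPprime⟩ := by
      refine lt_of_le_not_ge hpP fun hge => ?_
      exact notMem_of_isSMulRegular hx hp (hge hxP)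
    calc ((n + 1 : ℕ) : ℕ∞) = n + 1 := by simp
      _ ≤ Order.coheight (⟨P, hPprime⟩ : PrimeSpectrum R) + 1 := by
        gcongr
        exact ih hMx ⟨P, hPprime⟩ hP
      _ ≤ Order.coheight p := Order.coheight_add_one_le hlt

/-- A Cohen–Macaulay local ring has a regular sequence as long as every chain of primes. -/
lemma IsCMLocalRing.exists_depthGE (hCM : IsCMLocalRing R) :
    ∃ d : ℕ, DepthGE R d R ∧ ∀ p : PrimeSpectrum R, Order.coheight p ≤ d := by
  unfold IsCMLocalRing seqDepth at hCM
  set S := {n : ℕ∞ | ∃ rs : List R, (rs.length : ℕ∞) = n ∧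
    (∀ r ∈ rs, r ∈ IsLocalRing.maximalIdeal R) ∧ RingTheory.Sequence.IsRegular R rs} with hS
  have hlt : sSup S < ⊤ := by
    have h1 := ringKrullDim_lt_top (R := R)
    rw [← hCM] at h1
    exact WithBot.coe_lt_coe.1 h1
  have hne : Nonempty S := ⟨0, [], by simp, by simp, RingTheory.Sequence.IsRegular.nil R R⟩
  obtain ⟨rs, hlen, hmem, hreg⟩ := ENat.sSup_mem_of_nonempty_of_lt_top hlt
  refine ⟨rs.length, ⟨rs, rfl, hmem, hreg.toIsWeaklyRegular⟩, fun p => ?_⟩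
  rw [hlen]
  have h2 := Order.coheight_le_krullDim p
  change _ ≤ ringKrullDim R at h2
  rw [← hCM] at h2
  exact WithBot.coe_le_coe.1 h2

end Depth

/-! ### Homomorphisms factoring through a module -/

section Trace

variable {R : Type} [CommRing R]

section

variable {P L M N : Type} [AddCommGroup P] [Module R P] [AddCommGroup L] [Module R L]
  [AddCommGroup M] [Module R M] [AddCommGroup N] [Module R N]

/-- The homomorphisms `M → N` that are sums of homomorphisms factoring through `P`, that is, those
that factor through a finite power of `P`. -/
def factorSpan (R : Type) [CommRing R] (P M N : Type) [AddCommGroup P] [Module R P]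
    [AddCommGroup M] [Module R M] [AddCommGroup N] [Module R N] : Submodule R (M →ₗ[R] N) :=
  Submodule.span R {φ | ∃ (a : M →ₗ[R] P) (b : P →ₗ[R] N), φ = b ∘ₗ a}

lemma comp_mem_factorSpan (a : M →ₗ[R] P) (b : P →ₗ[R] N) : b ∘ₗ a ∈ factorSpan R P M N :=
  Submodule.subset_span ⟨a, b, rfl⟩

/-- A linear operator on homomorphisms preserves `factorSpan` if it does so on generators. -/
lemma map_mem_factorSpan {P' M' N' : Type} [AddCommGroup P'] [Module R P'] [AddCommGroup M']
    [Module R M'] [AddCommGroup N'] [Module R N'] (F : (M →ₗ[R] N) →ₗ[R] (M' →ₗ[R] N'))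
    (hF : ∀ (a : M →ₗ[R] P) (b : P →ₗ[R] N), F (b ∘ₗ a) ∈ factorSpan R P' M' N')
    {φ : M →ₗ[R] N} (hφ : φ ∈ factorSpan R P M N) : F φ ∈ factorSpan R P' M' N' := by
  have : factorSpan R P M N ≤ (factorSpan R P' M' N').comap F := by
    refine Submodule.span_le.2 ?_
    rintro _ ⟨a, b, rfl⟩
    exact hF a b
  exact this hφ

lemma factorSpan_comp_right {φ : M →ₗ[R] N} (hφ : φ ∈ factorSpan R P M N) (f : L →ₗ[R] M) :
    φ ∘ₗ f ∈ factorSpan R P L N :=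
  map_mem_factorSpan (LinearMap.lcomp R N f) (fun a b => comp_mem_factorSpan (a ∘ₗ f) b) hφ

lemma factorSpan_comp_left {φ : M →ₗ[R] N} (hφ : φ ∈ factorSpan R P M N) (f : N →ₗ[R] L) :
    f ∘ₗ φ ∈ factorSpan R P M L :=
  map_mem_factorSpan (LinearMap.compRight R f) (fun a b => comp_mem_factorSpan a (f ∘ₗ b)) hφ

lemma factorSpan_quotSMulTop (z : R) {φ : M →ₗ[R] N} (hφ : φ ∈ factorSpan R P M N) :
    QuotSMulTop.map z φ ∈
      factorSpan R (QuotSMulTop z P) (QuotSMulTop z M) (QuotSMulTop z N) :=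
  map_mem_factorSpan (QuotSMulTop.map z)
    (fun a b => by
      rw [QuotSMulTop.map_comp]
      exact comp_mem_factorSpan _ _) hφ

/-- Homomorphisms factoring through powers of `P` kill the `z`-torsion when `z` is `P`-regular. -/
lemma apply_eq_zero_of_mem_factorSpan {z : R} (hz : IsSMulRegular P z) {φ : M →ₗ[R] N}
    (hφ : φ ∈ factorSpan R P M N) {m : M} (hm : z • m = 0) : φ m = 0 := by
  have : factorSpan R P M N ≤ LinearMap.ker (LinearMap.applyₗ (R := R) (M₂ := N) m) := by
    refine Submodule.span_le.2 ?_
    rintro _ ⟨a, b, rfl⟩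
    have : a m = 0 := hz.right_eq_zero_of_smul (by rw [← map_smul, hm, map_zero])
    simp [this]
  exact this hφ

/-- A homomorphism through powers of `R` lifts along any epimorphism. -/
lemma exists_lift_of_mem_factorSpan (g : M →ₗ[R] N) (hg : Function.Surjective g)
    {φ : L →ₗ[R] N} (hφ : φ ∈ factorSpan R R L N) : ∃ t ∈ factorSpan R R L M, g ∘ₗ t = φ := by
  have : factorSpan R R L N ≤ (factorSpan R R L M).map (LinearMap.compRight R g) := by
    refine Submodule.span_le.2 ?_
    rintro _ ⟨a, b, rfl⟩
    obtain ⟨m, hm⟩ := hg (b 1)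
    refine ⟨LinearMap.toSpanSingleton R M m ∘ₗ a, comp_mem_factorSpan _ _, ?_⟩
    ext x
    have : b (a x) = a x • b 1 := by rw [← map_smul, smul_eq_mul, mul_one]
    simp [hm, this]
  obtain ⟨t, ht, rfl⟩ := this hφ
  exact ⟨t, ht, rfl⟩

/-- The homomorphisms `M → N` that factor through an object of the resolving subcategory `𝒳`. -/
def factorCat {𝒳 : Set (ModuleCat.{0} R)} (h : IsResolving R 𝒳) (M N : Type) [AddCommGroup M]
    [Module R M] [AddCommGroup N] [Module R N] : Submodule R (M →ₗ[R] N) where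
  carrier := {φ | ∃ Y ∈ 𝒳, ∃ (a : M →ₗ[R] Y) (b : Y →ₗ[R] N), φ = b ∘ₗ a}
  zero_mem' := ⟨.of R R, h.ring_mem, 0, 0, rfl⟩
  add_mem' := by
    rintro _ _ ⟨Y, hY, a, b, rfl⟩ ⟨Y', hY', a', b', rfl⟩
    refine ⟨.of R (Y × Y'), h.prod hY hY', a.prod a', b.coprod b', ?_⟩
    ext x
    simp
  smul_mem' := by
    rintro c _ ⟨Y, hY, a, b, rfl⟩
    exact ⟨Y, hY, a, c • b, rfl⟩

lemma mem_factorCat_of_mem_factorSpan {𝒳 : Set (ModuleCat.{0} R)} (h : IsResolving R 𝒳)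
    (hP : ModuleCat.of R P ∈ 𝒳) {φ : M →ₗ[R] N} (hφ : φ ∈ factorSpan R P M N) :
    φ ∈ factorCat h M N := by
  have : factorSpan R P M N ≤ factorCat h M N := by
    refine Submodule.span_le.2 ?_
    rintro _ ⟨a, b, rfl⟩
    exact ⟨.of R P, hP, a, b, rfl⟩
  exact this hφ

end

lemma exists_free_of_mem_factorSpan {M N : Type} [AddCommGroup M] [Module R M] [AddCommGroup N]
    [Module R N] {φ : M →ₗ[R] N} (hφ : φ ∈ factorSpan R R M N) :
    ∃ (n : ℕ) (a : M →ₗ[R] (Fin n → R)) (b : (Fin n → R) →ₗ[R] N), φ = b ∘ₗ a := by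
  induction hφ using Submodule.span_induction with
  | mem φ hφ =>
    obtain ⟨a, b, rfl⟩ := hφ
    exact ⟨1, LinearMap.pi fun _ => a, b ∘ₗ LinearMap.proj 0, rfl⟩
  | zero => exact ⟨0, 0, 0, rfl⟩
  | add φ ψ _ _ hφ hψ =>
    obtain ⟨n, a, b, rfl⟩ := hφ
    obtain ⟨m, a', b', rfl⟩ := hψ
    let e : ((Fin n → R) × (Fin m → R)) ≃ₗ[R] (Fin (n + m) → R) :=
      (LinearEquiv.sumArrowLequivProdArrow (Fin n) (Fin m) R R).symm.trans
        (LinearEquiv.funCongrLeft R R finSumFinEquiv.symm)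
    refine ⟨n + m, e.toLinearMap ∘ₗ a.prod a', b.coprod b' ∘ₗ e.symm.toLinearMap, ?_⟩
    ext x
    simp
  | smul c φ _ hφ =>
    obtain ⟨n, a, b, rfl⟩ := hφ
    exact ⟨n, a, c • b, rfl⟩

lemma comp_mem_factorSpan_fin {M N : Type} [AddCommGroup M] [Module R M] [AddCommGroup N]
    [Module R N] {n : ℕ} (a : M →ₗ[R] (Fin n → R)) (b : (Fin n → R) →ₗ[R] N) :
    b ∘ₗ a ∈ factorSpan R R M N := by
  have : b ∘ₗ a = ∑ i, LinearMap.toSpanSingleton R N (b (Pi.single i 1)) ∘ₗ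
      (LinearMap.proj i ∘ₗ a) := by
    ext x
    have hx : a x = ∑ i, a x i • (Pi.single i (1 : R) : Fin n → R) := by
      ext j
      simp [Finset.sum_apply, Pi.single_apply]
    simp only [LinearMap.comp_apply, LinearMap.sum_apply]
    conv_lhs => rw [hx, map_sum]
    simp
  rw [this]
  exact Submodule.sum_mem _ fun i _ => comp_mem_factorSpan _ _

/-- A finitely generated module is free at `p` if and only if multiplication by some `s ∉ p`
factors through a finite free module. -/
lemma free_localized_iff [IsNoetherianRing R] {M : Type} [AddCommGroup M] [Module R M]
    [Module.Finite R M] (p : PrimeSpectrum R) :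
    Module.Free (Localization.AtPrime p.asIdeal) (LocalizedModule p.asIdeal.primeCompl M) ↔
      ∃ s ∉ p.asIdeal, s • LinearMap.id ∈ factorSpan R R M M := by
  set S := p.asIdeal.primeCompl with hS
  set A := Localization.AtPrime p.asIdeal
  constructor
  · intro hfree
    obtain ⟨n, π, hπ⟩ := Module.Finite.exists_fin' R M
    let πS := LocalizedModule.map S π
    have hπS : Function.Surjective πS := LocalizedModule.map_surjective S π hπ
    obtain ⟨σ, hσ⟩ := Module.projective_lifting_property πS LinearMap.id hπS
    have hfp : Module.FinitePresentation R M := Module.finitePresentation_of_finite R M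
    obtain ⟨t, u, htu⟩ := Module.FinitePresentation.exists_lift_of_isLocalizedModule S
      (LocalizedModule.mkLinearMap S (Fin n → R))
      ((σ.restrictScalars R) ∘ₗ LocalizedModule.mkLinearMap S M)
    have h1 : (LocalizedModule.mkLinearMap S M).comp (π ∘ₗ t) =
        (LocalizedModule.mkLinearMap S M).comp ((u : R) • LinearMap.id) := by
      ext x
      have h2 := LinearMap.congr_fun htu x
      have h3 := congrArg πS h2
      have h4 : πS (σ (LocalizedModule.mkLinearMap S M x)) = LocalizedModule.mkLinearMap S M x :=
        LinearMap.congr_fun hσ _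
      have h5 : πS (LocalizedModule.mkLinearMap S _ (t x)) =
        LocalizedModule.mkLinearMap S M (π (t x)) := by
        simp [πS, LocalizedModule.map_mk, LocalizedModule.mkLinearMap_apply]
      have h6 : πS ((u • ((σ.restrictScalars R) ∘ₗ LocalizedModule.mkLinearMap S M)) x) =
          (u : R) • πS (σ (LocalizedModule.mkLinearMap S M x)) := 
        LinearMap.map_smul_of_tower πS (u : R) (σ (LocalizedModule.mkLinearMap S M x))
      rw [LinearMap.comp_apply, h5, h6, h4] at h3
      simpa using h3
    obtain ⟨v, hv⟩ := Module.Finite.exists_smul_of_comp_eq_of_isLocalizedModule S _ _ _ h1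
    refine ⟨v * u, (v * u).2, ?_⟩
    have : ((v : R) * u) • (LinearMap.id : M →ₗ[R] M) = (v : R) • (π ∘ₗ t) := by
      rw [mul_smul]
      exact hv.symm
    rw [this]
    exact Submodule.smul_mem _ _ (comp_mem_factorSpan_fin _ _)
  · rintro ⟨s, hs, hsM⟩
    obtain ⟨n, a, b, hab⟩ := exists_free_of_mem_factorSpan hsM
    have hu : IsUnit (algebraMap R A s) := IsLocalization.map_units A (⟨s, hs⟩ : S)
    obtain ⟨w, hw⟩ := hu.exists_left_inv
    have hproj : Module.Projective A (LocalizedModule S M) := by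
      refine Module.Projective.of_split (LocalizedModule.map S a) (w • LocalizedModule.map S b) ?_
      refine LinearMap.ext fun x => ?_
      induction x using LocalizedModule.induction_on with
      | h m c =>
        have h1 : b (a m) = s • m := (LinearMap.congr_fun hab m).symm
        have h2 : LocalizedModule.map S b (LocalizedModule.map S a (LocalizedModule.mk m c)) =
            algebraMap R A s • LocalizedModule.mk m c := by
          rw [algebraMap_smul, LocalizedModule.smul'_mk, ← h1]
          exact (congrArg _ (LocalizedModule.map_mk S a m c)).trans
            (LocalizedModule.map_mk S b (a m) c)
        change w • LocalizedModule.map S b (LocalizedModule.map S a (LocalizedModule.mk m c)) = _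
        rw [h2, smul_smul, hw, one_smul]
        rfl
    have : Module.Finite A (LocalizedModule S M) := inferInstance
    exact Module.free_of_flat_of_isLocalRing

end Trace

/-! ### Nonfree loci -/

section Locus

variable {R : Type} [CommRing R]

/-- If `t` lifts multiplication by `s` on `N` along `g`, then `s - t ∘ g` maps `M` into
`ker g = L`. -/
lemma exists_section_of_lift {L M N : Type} [AddCommGroup L] [Module R L] [AddCommGroup M]
    [Module R M] [AddCommGroup N] [Module R N] (f : L →ₗ[R] M) (g : M →ₗ[R] N)
    (hf : Function.Injective f) (hfg : Function.Exact f g) {s : R} {t : N →ₗ[R] M}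
    (hgt : g ∘ₗ t = s • LinearMap.id) : ∃ u : M →ₗ[R] L, ∀ x, f (u x) = s • x - t (g x) := by
  have hgt' : ∀ y, g (t y) = s • y := fun y => LinearMap.congr_fun hgt y
  let e := LinearEquiv.ofInjective f hf
  refine ⟨e.symm.toLinearMap ∘ₗ
    (s • LinearMap.id - t ∘ₗ g).codRestrict (LinearMap.range f) (fun x => ?_), fun x => ?_⟩
  · have h1 : ∀ y, f (e.symm y) = y := fun y => congrArg Subtype.val (e.apply_symm_apply y)
    simp [h1]
  · rw [← hfg.linearMap_ker_eq]
    simp [hgt']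

lemma catNonfreeLocus_subset (𝒳 : Set (ModuleCat.{0} R)) :
    catNonfreeLocus R 𝒳 ⊆ nonFieldLocus R := by
  intro p hp hfield
  simp only [catNonfreeLocus, Set.mem_iUnion] at hp
  obtain ⟨M, hM, hp⟩ := hp
  let := hfield.toField
  exact hp (Module.Free.of_divisionRing (Localization.AtPrime p.asIdeal) _)

section

variable [IsNoetherianRing R]

lemma notMem_nonfreeLocus_iff {M : Type} [AddCommGroup M] [Module R M] [Module.Finite R M]
    (p : PrimeSpectrum R) :
    p ∉ nonfreeLocus R M ↔ ∃ s ∉ p.asIdeal, s • LinearMap.id ∈ factorSpan R R M M := by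
  rw [← free_localized_iff]
  exact not_not

lemma specClosed_nonfreeLocus {M : Type} [AddCommGroup M] [Module R M] [Module.Finite R M] :
    SpecClosed R (nonfreeLocus R M) := by
  intro p hp q hpq
  by_contra hq
  obtain ⟨s, hs, h⟩ := (notMem_nonfreeLocus_iff q).1 hq
  exact (notMem_nonfreeLocus_iff p).2 ⟨s, fun h' => hs (hpq h'), h⟩ hp

lemma specClosed_catNonfreeLocus {𝒳 : Set (ModuleCat.{0} R)}
    (hfin : ∀ M ∈ 𝒳, Module.Finite R M) : SpecClosed R (catNonfreeLocus R 𝒳) := by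
  intro p hp q hpq
  simp only [catNonfreeLocus, Set.mem_iUnion] at hp ⊢
  obtain ⟨M, hM, hp⟩ := hp
  have := hfin M hM
  exact ⟨M, hM, specClosed_nonfreeLocus p hp q hpq⟩

end

section

variable [IsNoetherianRing R] {Φ : Set (PrimeSpectrum R)}

lemma mem_Vinv_iff {M : ModuleCat.{0} R} [Module.Finite R M] : M ∈ Vinv R Φ ↔
    ∀ p ∉ Φ, ∃ s ∉ p.asIdeal, s • LinearMap.id ∈ factorSpan R R M M := by
  simp only [Vinv, Set.mem_ofPred_eq, ← notMem_nonfreeLocus_iff]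
  exact ⟨fun h p hp h' => hp (h.2 h'), fun h => ⟨‹_›, fun p hp => by_contra fun h' => h p h' hp⟩⟩

lemma isResolving_Vinv : IsResolving R (Vinv R Φ) := by
  refine ⟨fun M hM => hM.1, ?_, ?_, ?_, ?_, ?_⟩
  · rintro M N ⟨e⟩ hM
    have := hM.1
    have : Module.Finite R N := Module.Finite.equiv e
    rw [mem_Vinv_iff] at hM ⊢
    intro p hp
    obtain ⟨s, hs, h⟩ := hM p hp
    refine ⟨s, hs, ?_⟩
    convert factorSpan_comp_left (factorSpan_comp_right h e.symm.toLinearMap) e.toLinearMap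
    ext x
    simp
  · rw [mem_Vinv_iff]
    intro p hp
    refine ⟨1, p.asIdeal.ne_top_iff_one.1 p.2.ne_top, ?_⟩
    rw [one_smul]
    exact comp_mem_factorSpan LinearMap.id LinearMap.id
  · rintro M N ⟨i, π, hπ⟩ hM
    have := hM.1
    have hx : ∀ x, π (i x) = x := fun x => LinearMap.congr_fun hπ x
    have : Module.Finite R N := Module.Finite.of_surjective π fun x => ⟨i x, hx x⟩
    rw [mem_Vinv_iff] at hM ⊢
    intro p hp
    obtain ⟨s, hs, h⟩ := hM p hp
    refine ⟨s, hs, ?_⟩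
    convert factorSpan_comp_left (factorSpan_comp_right h i) π
    ext x
    simp [hx]
  · intro L M N f g hf hg hfg hL hN
    have := hL.1
    have := hN.1
    have : Module.Finite R M := Module.Finite.of_exact hfg hg
    rw [mem_Vinv_iff] at hL hN ⊢
    intro p hp
    obtain ⟨s, hs, h⟩ := hL p hp
    obtain ⟨s', hs', h'⟩ := hN p hp
    refine ⟨s * s', p.2.mul_notMem hs hs', ?_⟩
    obtain ⟨t, ht, hgt⟩ := exists_lift_of_mem_factorSpan g hg h'
    obtain ⟨u, hu⟩ := exists_section_of_lift f g hf hfg hgt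
    have h1 := Submodule.add_mem _
      (factorSpan_comp_left (factorSpan_comp_right h u) f)
      (Submodule.smul_mem _ s (factorSpan_comp_right ht g))
    convert h1
    ext x
    simp [hu, smul_sub, mul_smul]
  · intro L M N f g hf hg hfg hM hN
    have := hM.1
    have := hN.1
    have : Module.Finite R L := Module.Finite.of_injective f hf
    rw [mem_Vinv_iff] at hM hN ⊢
    intro p hp
    obtain ⟨s, hs, h⟩ := hM p hp
    obtain ⟨s', hs', h'⟩ := hN p hp
    refine ⟨s' * s, p.2.mul_notMem hs' hs, ?_⟩
    obtain ⟨t, ht, hgt⟩ := exists_lift_of_mem_factorSpan g hg h'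
    obtain ⟨u, hu⟩ := exists_section_of_lift f g hf hfg hgt
    have huf : ∀ x, u (f x) = s' • x := fun x => hf (by
      rw [hu, hfg.apply_apply_eq_zero, map_zero, sub_zero, map_smul])
    convert factorSpan_comp_left (factorSpan_comp_right h f) u
    ext x
    simp [huf, mul_smul, smul_comm s s']

lemma quotient_mem_Vinv (hΦ : SpecClosed R Φ) {p : PrimeSpectrum R} (hp : p ∈ Φ) :
    ModuleCat.of R (R ⧸ p.asIdeal) ∈ Vinv R Φ := by
  rw [mem_Vinv_iff]
  intro q hq
  have : ¬ p.asIdeal ≤ q.asIdeal := fun h => hq (hΦ p hp q h)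
  obtain ⟨s, hs, hsq⟩ := Set.not_subset.1 this
  refine ⟨s, hsq, ?_⟩
  have h0 : s • (LinearMap.id : (R ⧸ p.asIdeal) →ₗ[R] (R ⧸ p.asIdeal)) = 0 := by
    refine LinearMap.ext fun x => ?_
    induction x using Submodule.Quotient.induction_on with
    | H x =>
      change s • (Submodule.Quotient.mk x : R ⧸ p.asIdeal) = 0
      rw [← Submodule.Quotient.mk_smul, Submodule.Quotient.mk_eq_zero]
      exact Ideal.mul_mem_right _ _ hs
  exact (congrArg (· ∈ factorSpan R R (R ⧸ p.asIdeal) (R ⧸ p.asIdeal)) h0).mpr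
    (Submodule.zero_mem _)

end

section

open IsLocalRing

/-- The canonical map `R/p → κ(p)`. -/
def quotientToResidue (p : PrimeSpectrum R) :
    (R ⧸ p.asIdeal) →ₗ[R] ResidueField (Localization.AtPrime p.asIdeal) :=
  (IsScalarTower.toAlgHom R (R ⧸ p.asIdeal) p.asIdeal.ResidueField).toLinearMap

instance isLocalizedModule_quotientToResidue (p : PrimeSpectrum R) :
    IsLocalizedModule p.asIdeal.primeCompl (quotientToResidue p) := by
  refine isLocalizedModule_iff_isLocalization.2 ?_
  have : Algebra.algebraMapSubmonoid (R ⧸ p.asIdeal) p.asIdeal.primeCompl =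
      nonZeroDivisors (R ⧸ p.asIdeal) := by
    ext x
    rw [mem_nonZeroDivisors_iff_ne_zero]
    constructor
    · rintro ⟨y, hy, rfl⟩ h0
      exact hy (Ideal.Quotient.eq_zero_iff_mem.1 h0)
    · intro hx
      obtain ⟨y, rfl⟩ := Ideal.Quotient.mk_surjective x
      exact ⟨y, fun hy => hx (Ideal.Quotient.eq_zero_iff_mem.2 hy), rfl⟩
  rw [this]
  exact inferInstanceAs (IsFractionRing (R ⧸ p.asIdeal) p.asIdeal.ResidueField)

/-- `κ(p)` is the localization of `R/p` at `p`. -/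
def residueEquiv (p : PrimeSpectrum R) :
    ResidueField (Localization.AtPrime p.asIdeal) ≃ₗ[Localization.AtPrime p.asIdeal]
      LocalizedModule p.asIdeal.primeCompl (R ⧸ p.asIdeal) :=
  (IsLocalizedModule.iso p.asIdeal.primeCompl (quotientToResidue p)).symm
    |>.extendScalarsOfIsLocalization p.asIdeal.primeCompl _

lemma kappaMemAdd_of_quotient_mem {𝒳 : Set (ModuleCat.{0} R)} {p : PrimeSpectrum R}
    (h : ModuleCat.of R (R ⧸ p.asIdeal) ∈ 𝒳) : kappaMemAdd R 𝒳 p := by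
  refine ⟨1, fun _ => .of _ (ResidueField (Localization.AtPrime p.asIdeal)),
    fun _ => ⟨_, h, ⟨residueEquiv p⟩⟩, ?_⟩
  exact ⟨LinearMap.pi fun _ => LinearMap.id, LinearMap.proj 0, rfl⟩

/-- `κ(p)` is free over `R_p` only when `R_p` is a field, because the maximal ideal of `R_p`
annihilates it. -/
lemma mem_nonfreeLocus_quotient {p : PrimeSpectrum R} (hp : p ∈ nonFieldLocus R) :
    p ∈ nonfreeLocus R (R ⧸ p.asIdeal) := by
  intro hfree
  refine hp ?_
  have hκ : Module.Free (Localization.AtPrime p.asIdeal)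
      (ResidueField (Localization.AtPrime p.asIdeal)) := Module.Free.of_equiv (residueEquiv p).symm
  have hfaith : FaithfulSMul (Localization.AtPrime p.asIdeal)
      (ResidueField (Localization.AtPrime p.asIdeal)) := inferInstance
  rw [IsLocalRing.isField_iff_maximalIdeal_eq, eq_bot_iff]
  intro x hx
  rw [Ideal.mem_bot]
  apply FaithfulSMul.algebraMap_injective _ (ResidueField (Localization.AtPrime p.asIdeal))
  rw [map_zero]
  exact (IsLocalRing.residue_eq_zero_iff x).2 hx

lemma catNonfreeLocus_Vinv [IsNoetherianRing R] {Φ : Set (PrimeSpectrum R)}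
    (hΦ : SpecClosed R Φ) (hΦ' : Φ ⊆ nonFieldLocus R) : catNonfreeLocus R (Vinv R Φ) = Φ := by
  apply Set.Subset.antisymm
  · intro p hp
    simp only [catNonfreeLocus, Set.mem_iUnion] at hp
    obtain ⟨M, hM, hp⟩ := hp
    exact hM.2 hp
  · intro p hp
    simp only [catNonfreeLocus, Set.mem_iUnion]
    exact ⟨_, quotient_mem_Vinv hΦ hp, mem_nonfreeLocus_quotient (hΦ' hp)⟩

end

end Locus

/-! ### The modules `R/p` -/

section Quotients

open IsLocalRing

variable {R : Type} [CommRing R] [IsNoetherianRing R] {𝒳 : Set (ModuleCat.{0} R)}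

/-- A module has a filtration whose factors are of the form `R/p` with `p` in its support, so a
resolving subcategory containing these factors contains the module. -/
lemma mem_of_support_subset (h : IsResolving R 𝒳) {Ψ : Set (PrimeSpectrum R)}
    (hΨ : ∀ p ∈ Ψ, ModuleCat.of R (R ⧸ p.asIdeal) ∈ 𝒳) {N : Type} [AddCommGroup N] [Module R N]
    [hN : Module.Finite R N] (hsupp : Module.support R N ⊆ Ψ) : ModuleCat.of R N ∈ 𝒳 := by
  revert hsupp
  induction hN using IsNoetherianRing.induction_on_isQuotientEquivQuotientPrime R with
  | subsingleton N => exact fun _ => h.subsingleton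
  | quotient N p e =>
    intro hsupp
    refine h.congr e.symm (hΨ p (hsupp ?_))
    rw [e.support_eq, Module.mem_support_iff_of_finite, Ideal.annihilator_quotient]
  | exact N₁ N₂ N₃ f g hf hg hfg h₁ h₃ =>
    intro hsupp
    rw [Module.support_of_exact hfg hf hg, Set.union_subset_iff] at hsupp
    exact h.ext f g hf hg hfg (h₁ hsupp.1) (h₃ hsupp.2)

/-- If `κ(p) ∈ add 𝒳_p`, then some composite `κ(p) → X_p → κ(p)` with `X ∈ 𝒳` is nonzero. Clearing
denominators gives maps `R/p → X → R/p` whose composite is multiplication by an element outside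
`p`. -/
lemma exists_factor_of_kappaMemAdd (hfin : ∀ M ∈ 𝒳, Module.Finite R M)
    {p : PrimeSpectrum R} (hp : kappaMemAdd R 𝒳 p) :
    ∃ X ∈ 𝒳, ∃ (f : (R ⧸ p.asIdeal) →ₗ[R] X) (g : X →ₗ[R] (R ⧸ p.asIdeal)), ∃ s ∉ p.asIdeal,
      ∀ x, g (f x) = s • x := by
  obtain ⟨n, Y, hY, σ, ρ, hρσ⟩ := hp
  obtain ⟨i, hi⟩ : ∃ i, ρ (Pi.single i (σ 1 i)) ≠ 0 := by
    by_contra! hall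
    have h1 : ρ (σ 1) = 1 := LinearMap.congr_fun hρσ 1
    have h2 : σ 1 = ∑ i, Pi.single i (σ 1 i) := (Finset.univ_sum_single (σ 1)).symm
    rw [h2, map_sum, Finset.sum_eq_zero fun i _ => hall i] at h1
    exact zero_ne_one h1
  obtain ⟨X, hX, ⟨e⟩⟩ := hY i
  have := hfin X hX
  have : Module.FinitePresentation R X := Module.finitePresentation_of_finite R X
  have : Module.FinitePresentation R (R ⧸ p.asIdeal) := Module.finitePresentation_of_finite R _
  set S := p.asIdeal.primeCompl with hS
  let f₀ : ResidueField (Localization.AtPrime p.asIdeal) →ₗ[Localization.AtPrime p.asIdeal]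
      LocalizedModule S X := e.toLinearMap ∘ₗ LinearMap.proj i ∘ₗ σ
  let g₀ : LocalizedModule S X →ₗ[Localization.AtPrime p.asIdeal]
      ResidueField (Localization.AtPrime p.asIdeal) :=
    ρ ∘ₗ LinearMap.single _ (fun j => Y j) i ∘ₗ e.symm.toLinearMap
  have hgf : g₀ (f₀ 1) ≠ 0 := by simpa [f₀, g₀] using hi
  obtain ⟨f, u, hf⟩ := Module.FinitePresentation.exists_lift_of_isLocalizedModule S
    (LocalizedModule.mkLinearMap S X) ((f₀.restrictScalars R) ∘ₗ quotientToResidue p)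
  obtain ⟨g, v, hg⟩ := Module.FinitePresentation.exists_lift_of_isLocalizedModule S
    (quotientToResidue p) ((g₀.restrictScalars R) ∘ₗ LocalizedModule.mkLinearMap S X)
  have h1 : quotientToResidue p (g (f 1)) ≠ 0 := by
    have hf1 : LocalizedModule.mkLinearMap S X (f 1) = (u : R) • f₀ 1 := by
      have h2 : LocalizedModule.mkLinearMap S X (f 1) = (u : R) • f₀ (quotientToResidue p 1) :=
        LinearMap.congr_fun hf 1
      have h3 : quotientToResidue p 1 = 1 :=
        map_one (algebraMap (R ⧸ p.asIdeal) p.asIdeal.ResidueField)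
      rwa [h3] at h2
    have hg1 : quotientToResidue p (g (f 1)) =
        (v : R) • g₀ (LocalizedModule.mkLinearMap S X (f 1)) :=
      LinearMap.congr_fun hg (f 1)
    rw [hg1, hf1, LinearMap.map_smul_of_tower]
    intro h0
    apply hgf
    apply IsLocalizedModule.smul_injective (quotientToResidue p) (v * u)
    change (v * u) • g₀ (f₀ 1) = (v * u) • 0
    rw [smul_zero, mul_smul]
    exact h0
  obtain ⟨s, hs⟩ := Ideal.Quotient.mk_surjective (g (f 1))
  refine ⟨X, hX, f, g, s, fun hsp => h1 ?_, fun x => ?_⟩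
  · rw [← hs, Ideal.Quotient.eq_zero_iff_mem.2 hsp, map_zero]
  · obtain ⟨r, rfl⟩ := Ideal.Quotient.mk_surjective x
    have hr : Ideal.Quotient.mk p.asIdeal r = r • (1 : R ⧸ p.asIdeal) := by
      rw [Algebra.smul_def, mul_one]; rfl
    rw [hr, map_smul, map_smul, ← hs, smul_comm s r, Algebra.smul_def s, mul_one]
    rfl

/-- Induct from larger primes to smaller ones: if `R/p → X → R/p` is multiplication by `s ∉ p` with
`X ∈ 𝒳`, then `s` is regular on `R/p` and `R/(p + s)` is supported at primes strictly containing
`p`. -/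
lemma quotient_mem (h : IsResolving R 𝒳) {Φ : Set (PrimeSpectrum R)} (hΦ : SpecClosed R Φ)
    (hκ : ∀ p ∈ Φ, kappaMemAdd R 𝒳 p) (p : PrimeSpectrum R) (hp : p ∈ Φ) :
    ModuleCat.of R (R ⧸ p.asIdeal) ∈ 𝒳 := by
  have hwf : WellFoundedGT (PrimeSpectrum R) :=
    ⟨InvImage.wf PrimeSpectrum.asIdeal (wellFounded_gt (α := Ideal R))⟩
  induction p using WellFoundedGT.induction with
  | ind p ih =>
    obtain ⟨X, hX, f, g, s, hs, hgf⟩ := exists_factor_of_kappaMemAdd h.fg (hκ p hp)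
    refine mem_of_factor h s (Y := X) hX f g hgf ?_ ?_
    · have : Submodule.torsionBy R (R ⧸ p.asIdeal) s = ⊥ := by
        rw [eq_bot_iff]
        intro x hx
        rw [Submodule.mem_torsionBy_iff] at hx
        obtain ⟨r, rfl⟩ := Ideal.Quotient.mk_surjective x
        have hx : Ideal.Quotient.mk p.asIdeal (s * r) = 0 := hx
        rw [Ideal.Quotient.eq_zero_iff_mem] at hx
        rw [Submodule.mem_bot, Ideal.Quotient.eq_zero_iff_mem]
        exact (p.2.mem_or_mem hx).resolve_left hs
      have : Subsingleton (Submodule.torsionBy R (R ⧸ p.asIdeal) s) := by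
        rw [this]
        infer_instance
      exact h.subsingleton
    · refine dimLEOne_of_mem h (mem_of_support_subset h (Ψ := {q | q ∈ Φ ∧ p < q})
        (fun q hq => ih q hq.2 hq.1) ?_)
      intro q hq
      rw [Module.support_quotSMulTop] at hq
      have hpq : p.asIdeal ≤ q.asIdeal := by
        have := Module.annihilator_le_of_mem_support hq.1
        rwa [Ideal.annihilator_quotient] at this
      refine ⟨hΦ p hp q hpq, lt_of_le_of_ne hpq ?_⟩
      rintro rfl
      exact hs (by simpa using hq.2)

end Quotients

/-! ### Reconstruction of a resolving subcategory from its nonfree locus -/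

section Main

open IsLocalRing

lemma mem_of_notMem_maximalIdeal {R : Type} [CommRing R] [IsLocalRing R]
    {𝒳 : Set (ModuleCat.{0} R)}
    (h : IsResolving R 𝒳) {P M : Type} [AddCommGroup P] [Module R P] [AddCommGroup M] [Module R M]
    (hP : ModuleCat.of R P ∈ 𝒳) {s : R} (hs : s ∉ maximalIdeal R)
    (hsT : s • LinearMap.id ∈ factorSpan R P M M) : ModuleCat.of R M ∈ 𝒳 := by
  obtain ⟨w, hw⟩ := (notMem_maximalIdeal.1 hs).exists_left_inv
  obtain ⟨Y, hY, a, b, hab⟩ := mem_factorCat_of_mem_factorSpan h hP hsT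
  refine h.retract (M := Y) a (w • b) (fun x => ?_) hY
  have h1 : b (a x) = s • x := (LinearMap.congr_fun hab x).symm
  rw [LinearMap.smul_apply, h1, smul_smul, hw, one_smul]

variable {R : Type} [CommRing R] [IsNoetherianRing R]

/-- If no prime of `Supp M` lies strictly below `p`, then some `y ∉ p` has `Supp (yM) ⊆ V(p)`:
for each `t ∈ p` no prime containing `ann M` avoids all products `c t ^ k` with `c ∉ p`, so one of
these products annihilates `M`; then multiply the factors `c` over generators `t` of `p`. -/
lemma exists_notMem_support_range_subset {M : Type} [AddCommGroup M] [Module R M]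
    [Module.Finite R M] (p : PrimeSpectrum R)
    (hmin : ∀ q ∈ Module.support R M, q ≤ p → q = p) :
    ∃ y ∉ p.asIdeal,
      Module.support R (LinearMap.range (y • LinearMap.id : M →ₗ[R] M)) ⊆ {q | p ≤ q} := by
  have h1 : ∀ t ∈ p.asIdeal, ∃ y, y ∉ p.asIdeal ∧ ∃ k : ℕ,
      y * t ^ k ∈ Module.annihilator R M := by
    intro t ht
    by_contra! hcon
    let S : Submonoid R := p.asIdeal.primeCompl ⊔ Submonoid.powers t
    have hdisj : Disjoint (Module.annihilator R M : Set R) (S : Set R) := by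
      rw [Set.disjoint_left]
      intro x hx hxS
      obtain ⟨y, hy, z, ⟨k, rfl⟩, rfl⟩ := Submonoid.mem_sup.1 hxS
      exact hcon y hy k hx
    obtain ⟨q, hq, hle, hqS⟩ := Ideal.exists_le_prime_disjoint _ S hdisj
    have hqp : (⟨q, hq⟩ : PrimeSpectrum R) = p := by
      refine hmin _ (Module.mem_support_iff_of_finite.2 hle) fun x hx => ?_
      by_contra hxp
      exact Set.disjoint_left.1 hqS hx (le_sup_left (a := p.asIdeal.primeCompl) hxp)
    have htq : t ∈ q := by
      rw [← hqp] at ht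
      exact ht
    exact Set.disjoint_left.1 hqS htq
      (le_sup_right (a := p.asIdeal.primeCompl) (Submonoid.mem_powers t))
  choose! y hy k hk using h1
  obtain ⟨G, hG⟩ := p.asIdeal.fg_of_isNoetherianRing
  have hGp : ∀ t ∈ G, t ∈ p.asIdeal := fun t ht => hG ▸ Ideal.subset_span ht
  refine ⟨∏ t ∈ G, y t, p.asIdeal.primeCompl.prod_mem fun t ht => hy t (hGp t ht), ?_⟩
  intro q hq
  change p.asIdeal ≤ q.asIdeal
  rw [← hG, Ideal.span_le]
  intro t ht
  refine q.2.mem_of_pow_mem (k t) (Module.annihilator_le_of_mem_support hq ?_)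
  rw [Module.mem_annihilator]
  rintro ⟨_, x, rfl⟩
  apply Subtype.ext
  change t ^ k t • (∏ t ∈ G, y t) • x = 0
  obtain ⟨c, hc⟩ := Finset.dvd_prod_of_mem y ht
  rw [hc, smul_smul, show t ^ k t * (y t * c) = c * (y t * t ^ k t) by ring, mul_smul,
    Module.mem_annihilator.1 (hk t (hGp t ht)), smul_zero]

/-- Modules that are, outside `Φ`, locally direct summands of powers of a Cohen–Macaulay module
`P ∈ 𝒳` of dimension `n` belong to `𝒳`, provided that `𝒳` contains all modules supported in `Φ`.
By induction on `n`: prime avoidance gives a `P`-regular `z` in the maximal ideal such that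
multiplication by `z` on `M` factors through an object of `𝒳`. The induction hypothesis, for the
modules `M/zM` and `P/zP` and the subcategory `dimLEOne 𝒳`, and `mem_of_factor` then give
`M ∈ 𝒳`. -/
lemma mem_of_locally_summand [IsLocalRing R] {Φ : Set (PrimeSpectrum R)} (hΦ : SpecClosed R Φ)
    (n : ℕ) : ∀ {𝒳 : Set (ModuleCat.{0} R)}, IsResolving R 𝒳 →
    (∀ (N : Type) [AddCommGroup N] [Module R N] [Module.Finite R N],
      Module.support R N ⊆ Φ → ModuleCat.of R N ∈ 𝒳) →
    ∀ (P M : Type) [AddCommGroup P] [Module R P] [Module.Finite R P] [AddCommGroup M] [Module R M]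
      [Module.Finite R M], ModuleCat.of R P ∈ 𝒳 → DepthGE R n P →
      (∀ p ∈ Module.support R P, Order.coheight p ≤ n) →
      Module.support R M ⊆ Module.support R P →
      (∀ r ∉ Φ, ∃ s ∉ r.asIdeal, s • LinearMap.id ∈ factorSpan R P M M) →
      ModuleCat.of R M ∈ 𝒳 := by
  induction n with
  | zero =>
    intro 𝒳 h hsupp P M _ _ _ _ _ _ hP _ hdim hMP hloc
    by_cases hm : closedPoint R ∈ Φ
    · refine hsupp M fun p hp => ?_
      have h0 : Order.coheight p = 0 := le_antisymm (by exact_mod_cast hdim p (hMP hp)) bot_le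
      have hpm : p = closedPoint R :=
        (Order.coheight_eq_zero.1 h0).eq_of_le (IsLocalRing.le_maximalIdeal p.2.ne_top)
      rwa [hpm]
    · obtain ⟨s, hs, hsT⟩ := hloc _ hm
      exact mem_of_notMem_maximalIdeal h hP hs hsT
  | succ n ih =>
    intro 𝒳 h hsupp P M _ _ _ _ _ _ hP hdepth hdim hMP hloc
    by_cases hm : closedPoint R ∈ Φ
    swap
    · obtain ⟨s, hs, hsT⟩ := hloc _ hm
      exact mem_of_notMem_maximalIdeal h hP hs hsT
    -- multiplication by the elements of `J` factors through objects of `𝒳`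
    let J : Ideal R :=
      (factorCat h M M).comap (LinearMap.toSpanSingleton R (M →ₗ[R] M) LinearMap.id)
    have hJ : ∀ r, r ∈ J ↔ r • LinearMap.id ∈ factorCat h M M := fun r => Iff.rfl
    have hass : ∀ p ∈ associatedPrimes R P, ¬ J ⊓ maximalIdeal R ≤ p := by
      intro p hp hle
      have hprime : p.IsPrime := hp.1
      have hcoh := hdepth.le_coheight ⟨p, hprime⟩ hp
      rcases hprime.inf_le.1 hle with hJp | hmp
      · by_cases hpΦ : (⟨p, hprime⟩ : PrimeSpectrum R) ∈ Φ
        · -- the associated prime `p` is minimal in the support of `P`, as `P` is Cohen–Macaulay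
          have hmin : ∀ q ∈ Module.support R M, q ≤ ⟨p, hprime⟩ → q = ⟨p, hprime⟩ := by
            intro q hq hqp
            by_contra hne
            have h1 := Order.coheight_add_one_le (lt_of_le_of_ne hqp hne)
            have h2 := hdim q (hMP hq)
            have h3 : ((n + 1 : ℕ) : ℕ∞) + 1 ≤ (n + 1 : ℕ) :=
              (add_le_add_left hcoh 1).trans (h1.trans h2)
            norm_cast at h3
            omega
          obtain ⟨y, hy, hys⟩ := exists_notMem_support_range_subset _ hmin
          refine hy (hJp ((hJ y).2 ⟨.of R (LinearMap.range (y • LinearMap.id : M →ₗ[R] M)),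
            hsupp _ (fun q hq => hΦ _ hpΦ q (hys hq)), LinearMap.rangeRestrict _,
            Submodule.subtype _, rfl⟩))
        · obtain ⟨s, hs, hsT⟩ := hloc _ hpΦ
          exact hs (hJp (mem_factorCat_of_mem_factorSpan h hP hsT))
      · have hpm : (⟨p, hprime⟩ : PrimeSpectrum R) = closedPoint R :=
          PrimeSpectrum.ext (le_antisymm (IsLocalRing.le_maximalIdeal hprime.ne_top) hmp)
        rw [hpm] at hcoh
        have h0 : Order.coheight (closedPoint R) = 0 :=
          Order.coheight_eq_zero.2 fun q _ => IsLocalRing.le_maximalIdeal q.2.ne_top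
        rw [h0] at hcoh
        norm_cast at hcoh
    obtain ⟨z, hz, hzass⟩ := exists_mem_forall_notMem (J ⊓ maximalIdeal R)
      (associatedPrimes.finite R P) (fun p hp => hp.1) hass
    have hzP : IsSMulRegular P z := isSMulRegular_of_forall_notMem hzass
    obtain ⟨Y, hY, a, b, hab⟩ := (hJ z).1 hz.1
    refine mem_of_factor h z (Y := Y) hY a b (fun x => (LinearMap.congr_fun hab x).symm) ?_ ?_
    · refine hsupp _ fun r hr => ?_
      by_contra hrΦ
      obtain ⟨s, hs, hsT⟩ := hloc r hrΦ
      refine hs (Module.annihilator_le_of_mem_support hr ?_)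
      rw [Module.mem_annihilator]
      rintro ⟨x, hx⟩
      exact Subtype.ext (apply_eq_zero_of_mem_factorSpan hzP hsT hx)
    · refine ih (isResolving_dimLEOne h) (fun N _ _ _ hN => dimLEOne_of_mem h (hsupp N hN))
        (QuotSMulTop z P) (QuotSMulTop z M) ?_ (hdepth.quotSMulTop hz.2 hzP) ?_ ?_ ?_
      · refine dimLEOne_of_exact h (LinearMap.lsmul R P z) (Submodule.mkQ _) hzP
          (Submodule.mkQ_surjective _) (fun u => ?_) hP hP
        exact quotSMulTop_mk_eq_zero_iff z u
      · intro p hp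
        rw [Module.support_quotSMulTop] at hp
        have hle := Module.annihilator_le_of_mem_support hp.1
        obtain ⟨q, hq, hqp⟩ := Ideal.exists_minimalPrimes_le hle
        have hqa := Module.associatedPrimes.minimalPrimes_annihilator_subset_associatedPrimes R P hq
        have hqprime : q.IsPrime := hqa.1
        have hlt : (⟨q, hqprime⟩ : PrimeSpectrum R) < p := by
          refine lt_of_le_of_ne hqp ?_
          rintro rfl
          exact hzass q hqa (by simpa using hp.2)
        have h1 := Order.coheight_add_one_le hlt
        have h2 := hdim ⟨q, hqprime⟩ (Module.mem_support_iff_of_finite.2 hq.1.2)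
        have h3 := h1.trans h2
        rw [Nat.cast_add, Nat.cast_one] at h3
        exact (ENat.add_le_add_iff_right (by simp)).1 h3
      · rw [Module.support_quotSMulTop, Module.support_quotSMulTop]
        exact Set.inter_subset_inter_left _ hMP
      · intro r hr
        obtain ⟨s, hs, hsT⟩ := hloc r hr
        refine ⟨s, hs, ?_⟩
        have := factorSpan_quotSMulTop z hsT
        rwa [map_smul, QuotSMulTop.map_id] at this

/-- Membership in `𝒳` is detected by the nonfree locus: this is `mem_of_locally_summand` for
`P = R`. -/
lemma Vinv_catNonfreeLocus [IsLocalRing R] (hCM : IsCMLocalRing R) {𝒳 : Set (ModuleCat.{0} R)}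
    (h : IsResolving R 𝒳) (hκ : ∀ p ∈ catNonfreeLocus R 𝒳, kappaMemAdd R 𝒳 p) :
    Vinv R (catNonfreeLocus R 𝒳) = 𝒳 := by
  apply Set.Subset.antisymm
  · intro M hM
    have := hM.1
    have hΦ := specClosed_catNonfreeLocus h.fg
    obtain ⟨d, hd, hdim⟩ := hCM.exists_depthGE
    refine mem_of_locally_summand hΦ d h
      (fun N _ _ _ hN => mem_of_support_subset h (quotient_mem h hΦ hκ) hN)
      R M h.ring_mem hd (fun p _ => hdim p) ?_ (mem_Vinv_iff.1 hM)
    intro p _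
    rw [Module.mem_support_iff_of_finite, Module.annihilator_eq_bot.2 inferInstance]
    exact bot_le
  · intro M hM
    refine ⟨h.fg M hM, fun p hp => ?_⟩
    simp only [catNonfreeLocus, Set.mem_iUnion]
    exact ⟨M, hM, hp⟩

end Main

/-- Over a Cohen-Macaulay local ring, `V` and `V⁻¹` are mutually inverse
bijections between resolving subcategories `𝒳` of `mod R` with `κ(p) ∈ add_{R_p} 𝒳_p` for
all `p ∈ V(𝒳)`, and specialization-closed subsets of `Spec R` contained in `s(R)`. -/
theorem classification_kappa_local_condition
    (R : Type) [CommRing R] [IsNoetherianRing R] [IsLocalRing R]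
    (hCM : IsCMLocalRing R) :
    (∀ 𝒳 : Set (ModuleCat.{0} R),
        IsResolving R 𝒳 → (∀ p ∈ catNonfreeLocus R 𝒳, kappaMemAdd R 𝒳 p) →
          SpecClosed R (catNonfreeLocus R 𝒳) ∧ catNonfreeLocus R 𝒳 ⊆ nonFieldLocus R) ∧
    (∀ Φ : Set (PrimeSpectrum R), SpecClosed R Φ → Φ ⊆ nonFieldLocus R →
        IsResolving R (Vinv R Φ) ∧
          (∀ p ∈ catNonfreeLocus R (Vinv R Φ), kappaMemAdd R (Vinv R Φ) p)) ∧
    (∀ 𝒳 : Set (ModuleCat.{0} R),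
        IsResolving R 𝒳 → (∀ p ∈ catNonfreeLocus R 𝒳, kappaMemAdd R 𝒳 p) →
          Vinv R (catNonfreeLocus R 𝒳) = 𝒳) ∧
    (∀ Φ : Set (PrimeSpectrum R), SpecClosed R Φ → Φ ⊆ nonFieldLocus R →
        catNonfreeLocus R (Vinv R Φ) = Φ) := by
  refine ⟨fun 𝒳 h _ => ⟨specClosed_catNonfreeLocus h.fg, catNonfreeLocus_subset 𝒳⟩,
    fun Φ hΦ hΦ' => ⟨isResolving_Vinv, fun p hp => ?_⟩,
    fun 𝒳 h hκ => Vinv_catNonfreeLocus hCM h hκ,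
    fun Φ hΦ hΦ' => catNonfreeLocus_Vinv hΦ hΦ'⟩
  rw [catNonfreeLocus_Vinv hΦ hΦ'] at hp
  exact kappaMemAdd_of_quotient_mem (quotient_mem_Vinv hΦ hp)

end
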